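/- arXiv:math/0010020 — 3 statements merged into one kernel-verified Lean document; each statement's English description precedes it below -/
import Mathlib

section
/- The 𝒪-lattice Λ⁴ contains exactly 240 3-vectors and exactly 2160 6-vectors, and the unitary group U(Λ⁴) acts transitively on the set of 3-vectors of Λ⁴ and transitively on the set of 6-vectors of Λ⁴. -/
open Polynomial

noncomputable section

/-- The Eisenstein ring `𝒪 = ℤ[ω]`, where `ω = e^{2πi/6}` is a primitive sixth root of
unity (so `ω² - ω + 1 = 0`), presented as `ℤ[X]/(X² - X + 1)`. -/
abbrev O : Type := AdjoinRoot (X ^ 2 - X + 1 : ℤ[X])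

/-- `ω`, the distinguished primitive sixth root of unity in `𝒪`. -/
def ω : O := AdjoinRoot.root _

lemma ω_sq : ω ^ 2 - ω + 1 = 0 := by
  have h := AdjoinRoot.eval₂_root (X ^ 2 - X + 1 : ℤ[X])
  simpa [ω, eval₂_add, eval₂_sub, eval₂_pow, eval₂_X, eval₂_one] using h

/-- Complex conjugation on the Eisenstein ring: the ring involution with
`conj ω = 1 - ω = ω⁻¹`. -/
def conj : O →+* O :=
  AdjoinRoot.lift (algebraMap ℤ O) (1 - ω) (by
    have h := ω_sq
    simp only [eval₂_add, eval₂_sub, eval₂_pow, eval₂_X, eval₂_one]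
    ring_nf
    ring_nf at h
    linear_combination h)

/-- `θ := ω - ω⁻¹ = ω - conj ω = 2ω - 1`, a square root of `-3` in `𝒪`. -/
def θ : O := ω - conj ω

/-- The Gram matrix of the 𝒪-lattice `Λᵏ` on its basis `r₁,…,r_k`:
`ψ(rᵢ,rᵢ) = 3`, `ψ(rᵢ,rᵢ₊₁) = θ`, `ψ(rᵢ,rⱼ) = 0` for `j > i+1`, and Hermitian symmetry
(`ψ(rᵢ₊₁,rᵢ) = conj θ`). -/
def gram (k : ℕ) : Fin k → Fin k → O := fun i j =>
  if i = j then 3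
  else if (i : ℕ) + 1 = (j : ℕ) then θ
  else if (j : ℕ) + 1 = (i : ℕ) then conj θ
  else 0

/-- The Hermitian form of `Λᵏ`, modelled on `Fin k → 𝒪` (coordinates with respect to the
basis `r₁,…,r_k`): 𝒪-linear in the first variable, conjugate-linear in the second. -/
def psi (k : ℕ) (x y : Fin k → O) : O :=
  ∑ i : Fin k, ∑ j : Fin k, x i * conj (y j) * gram k i j

/-- `g` belongs to the unitary group `U(Λᵏ)`: an 𝒪-module automorphism of `Λᵏ`
preserving the Hermitian form `ψ`. -/
def IsUnitary (k : ℕ) (g : (Fin k → O) ≃ₗ[O] (Fin k → O)) : Prop :=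
  ∀ x y, psi k (g x) (g y) = psi k x y

/-- The basis vector `rᵢ` of `Λᵏ` (indexing from `0`, so `r k i` is `r_{i+1}`). -/
def r (k : ℕ) (i : Fin k) : Fin k → O := Pi.single i 1

/-!
Divide `ψ` by `θ` to get a skew-Hermitian form `q` with values in `𝒪`. If `a` and `b` are 3-vectors
with `|q(a, b)| = 1`, the group generated by the reflections of order three in `a` and `b` carries
`a` to every unit multiple of `b`. By Cauchy–Schwarz, `|q(a, b)|²` is `0`, `1` or `3` for any two
3-vectors, and it is `3` only if they are proportional. Hence reflections carry a 3-vector which is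
not orthogonal to a whole chain of 3-vectors with consecutive products of absolute value `1` to the
first member of the chain. The basis `r₁, …, r₄` is such a chain, and no 3-vector is orthogonal to
all of it.

The lattice `Λ⁴` is isometric to the set of vectors of `𝒪⁴`, with its standard Hermitian form, whose
residues modulo `θ` lie in the ternary tetracode. This reduces the counts to those of Eisenstein
integers with given norm and residue, and it exhibits every 6-vector as a sum of two orthogonal
3-vectors. Move the first of these to `r₁`, and then the second to `r₃` by reflections fixing `r₁`;
so every 6-vector lies in the orbit of `r₁ + r₃`.
-/

namespace EisensteinLattice

/-! ### The Eisenstein ring -/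

lemma conj_ω : conj ω = 1 - ω :=
  AdjoinRoot.lift_root _

lemma ω_mul_conj_ω : ω * conj ω = 1 := by
  rw [conj_ω]; linear_combination -ω_sq

lemma θ_eq : θ = 2 * ω - 1 := by
  rw [θ, conj_ω]; ring

lemma conj_θ : conj θ = -θ := by
  simp only [θ, map_sub, conj_ω, map_one]; ring

lemma θ_mul_θ : θ * θ = -3 := by
  rw [θ_eq]; linear_combination 4 * ω_sq

/-- The Eisenstein ring as Mathlib's quadratic algebra with `ω² = -1 + ω`; it supplies
coordinates with respect to the `ℤ`-basis `1, ω` and the norm. -/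
def toQuadratic : O ≃ₐ[ℤ] QuadraticAlgebra ℤ (-1) 1 :=
  AlgEquiv.ofAlgHom
    (AdjoinRoot.liftAlgHom _ (Algebra.ofId ℤ _) QuadraticAlgebra.omega (by
      simp [sq, QuadraticAlgebra.omega_mul_omega_eq_add]))
    (QuadraticAlgebra.lift ⟨ω, by simp only [neg_smul, one_smul]; linear_combination ω_sq⟩)
    (by ext <;> simp [ω])
    (by ext; simp [ω])

@[simp]
lemma toQuadratic_ω : toQuadratic ω = QuadraticAlgebra.omega := by
  simp [toQuadratic, ω]

/-- The pair `(a, b)` with `z = a + b ω`. -/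
def coords : O ≃ ℤ × ℤ :=
  toQuadratic.toEquiv.trans (QuadraticAlgebra.equivProd _ _)

lemma coords_symm_apply (p : ℤ × ℤ) : coords.symm p = p.1 + p.2 * ω := by
  rw [Equiv.symm_apply_eq]
  ext <;> simp [coords, QuadraticAlgebra.equivProd]

lemma exists_eq_add_mul_ω (z : O) : ∃ a b : ℤ, z = a + b * ω :=
  ⟨_, _, by rw [← coords_symm_apply, coords.symm_apply_apply]⟩

/-- The norm `z ↦ z z̄`, as a natural number. -/
def norm : O →* ℕ :=
  Int.natAbsHom.toMonoidHom.comp ((QuadraticAlgebra.norm).comp toQuadratic.toMonoidHom)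

lemma norm_add_mul_ω (a b : ℤ) : (norm (a + b * ω) : ℤ) = a ^ 2 + a * b + b ^ 2 := by
  have : 0 ≤ a ^ 2 + a * b + b ^ 2 := by nlinarith [sq_nonneg (a + b), sq_nonneg a, sq_nonneg b]
  have h : QuadraticAlgebra.norm (toQuadratic (a + b * ω)) = a ^ 2 + a * b + b ^ 2 := by
    simp [QuadraticAlgebra.norm_def]; ring
  change ((QuadraticAlgebra.norm (toQuadratic (a + b * ω))).natAbs : ℤ) = _
  rw [h, Int.natAbs_of_nonneg this]

lemma mul_conj (z : O) : z * conj z = norm z := by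
  obtain ⟨a, b, rfl⟩ := exists_eq_add_mul_ω z
  rw [← Int.cast_natCast (R := O), norm_add_mul_ω, map_add, map_mul, conj_ω, map_intCast,
    map_intCast]
  push_cast
  linear_combination (-b ^ 2 : O) * ω_sq

@[simp]
lemma conj_conj (z : O) : conj (conj z) = z := by
  obtain ⟨a, b, rfl⟩ := exists_eq_add_mul_ω z
  simp [conj_ω]

instance : CharZero O :=
  charZero_of_injective_algebraMap (R := ℤ) <| by
    intro a b h
    simpa using congrArg (fun z => (toQuadratic z).re) h

@[simp]
lemma norm_eq_zero {z : O} : norm z = 0 ↔ z = 0 := by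
  constructor
  · intro h
    obtain ⟨a, b, rfl⟩ := exists_eq_add_mul_ω z
    have hab : a ^ 2 + a * b + b ^ 2 = 0 := by rw [← norm_add_mul_ω, h, Nat.cast_zero]
    have ha : a = 0 := by nlinarith [sq_nonneg (a + 2 * b)]
    have hb : b = 0 := by nlinarith [sq_nonneg (2 * a + b)]
    simp [ha, hb]
  · rintro rfl
    exact_mod_cast (mul_conj 0).symm.trans (zero_mul _)

instance : NoZeroDivisors O where
  eq_zero_or_eq_zero_of_mul_eq_zero {z w} h := by
    simpa only [map_mul, mul_eq_zero, norm_eq_zero] using norm_eq_zero.2 h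

@[simp]
lemma norm_neg (z : O) : norm (-z) = norm z := by
  have h : (norm (-z) : O) = norm z := by rw [← mul_conj, ← mul_conj, map_neg, neg_mul_neg]
  exact_mod_cast h

@[simp]
lemma norm_conj (z : O) : norm (conj z) = norm z := by
  have h : (norm (conj z) : O) = norm z := by rw [← mul_conj, ← mul_conj, conj_conj, mul_comm]
  exact_mod_cast h

@[simp]
lemma norm_ω : norm ω = 1 := by
  have h : (norm ω : O) = 1 := by rw [← mul_conj, ω_mul_conj_ω]
  exact_mod_cast h

@[simp]
lemma norm_θ : norm θ = 3 := by
  have h : (norm θ : O) = 3 := by rw [← mul_conj, conj_θ, mul_neg, θ_mul_θ, neg_neg]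
  exact_mod_cast h

@[simp]
lemma norm_two : norm 2 = 4 := by
  have h : (norm 2 : O) = 4 := by rw [← mul_conj, map_ofNat]; norm_num
  exact_mod_cast h

lemma θ_ne_zero : θ ≠ 0 := by
  simp [← norm_eq_zero]

lemma exists_eq_ω_pow {u : O} (hu : norm u = 1) : ∃ n : ℕ, u = ω ^ n := by
  obtain ⟨a, b, rfl⟩ := exists_eq_add_mul_ω u
  have hab : a ^ 2 + a * b + b ^ 2 = 1 := by rw [← norm_add_mul_ω, hu, Nat.cast_one]
  have ha : a ^ 2 ≤ 1 := by nlinarith [sq_nonneg (a + 2 * b)]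
  have hb : b ^ 2 ≤ 1 := by nlinarith [sq_nonneg (2 * a + b)]
  obtain ⟨ha₁, ha₂⟩ := abs_le.1 (sq_le_one_iff_abs_le_one a |>.1 ha)
  obtain ⟨hb₁, hb₂⟩ := abs_le.1 (sq_le_one_iff_abs_le_one b |>.1 hb)
  have ω_sq' : ω ^ 2 = ω - 1 := by linear_combination ω_sq
  have ω_cube : ω ^ 3 = -1 := by linear_combination (ω + 1) * ω_sq
  interval_cases a <;> interval_cases b <;> norm_num at hab
  · exact ⟨3, by simp [ω_cube]⟩
  · exact ⟨2, by rw [ω_sq']; push_cast; ring⟩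
  · exact ⟨4, by simp [pow_succ _ 3, ω_cube]⟩
  · exact ⟨1, by simp⟩
  · exact ⟨5, by rw [pow_add ω 3 2, ω_cube, ω_sq']; push_cast; ring⟩
  · exact ⟨0, by simp⟩

lemma two_dvd_of_two_dvd_norm {z : O} (h : 2 ∣ norm z) : 2 ∣ z := by
  obtain ⟨a, b, rfl⟩ := exists_eq_add_mul_ω z
  have hab : Even (a ^ 2 + a * b + b ^ 2) := by
    rw [← norm_add_mul_ω, even_iff_two_dvd]; exact_mod_cast h
  obtain ⟨⟨m, rfl⟩, ⟨n, rfl⟩⟩ : Even a ∧ Even b := by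
    simp only [Int.even_add, Int.even_mul, Int.even_pow] at hab
    tauto
  exact ⟨m + n * ω, by push_cast; ring⟩

/-- Reduction modulo `θ`, where `ω ≡ -1`. -/
def residue : O →+* ZMod 3 :=
  AdjoinRoot.lift (Int.castRingHom _) (-1) (by
    rw [eval₂_add, eval₂_sub, eval₂_pow, eval₂_X, eval₂_one]
    decide)

@[simp]
lemma residue_ω : residue ω = -1 :=
  AdjoinRoot.lift_root _

lemma residue_add_mul_ω (a b : ℤ) : residue (a + b * ω) = a - b := by
  simp [sub_eq_add_neg]

@[simp]
lemma residue_conj (z : O) : residue (conj z) = residue z := by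
  obtain ⟨a, b, rfl⟩ := exists_eq_add_mul_ω z
  have h : (1 : ZMod 3) + 1 = -1 := by decide
  simp [conj_ω, h]

lemma natCast_norm_eq_residue_sq (z : O) : (norm z : ZMod 3) = residue z ^ 2 := by
  rw [← map_natCast residue, ← mul_conj, map_mul, residue_conj]
  exact (sq _).symm

lemma residue_eq_zero_iff_three_dvd_norm {z : O} : residue z = 0 ↔ 3 ∣ norm z := by
  rw [← ZMod.natCast_eq_zero_iff, natCast_norm_eq_residue_sq, sq_eq_zero_iff]

lemma residue_eq_zero_iff {z : O} : residue z = 0 ↔ θ ∣ z := by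
  constructor
  · intro h
    obtain ⟨a, b, rfl⟩ := exists_eq_add_mul_ω z
    rw [residue_add_mul_ω, ← Int.cast_sub, ZMod.intCast_zmod_eq_zero_iff_dvd] at h
    obtain ⟨k, hk⟩ := h
    have hk' : (a : O) - b = 3 * k := by exact_mod_cast congrArg (Int.cast : ℤ → O) hk
    refine ⟨b * (1 - ω) - k * θ, ?_⟩
    rw [θ_eq]
    linear_combination hk' + (4 * k + 2 * b) * ω_sq
  · rintro ⟨w, rfl⟩
    simp [residue_eq_zero_iff_three_dvd_norm]

/-- The Eisenstein integers of norm `m` in the residue class `c` modulo `θ`. The coordinates of an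
element of norm `m` lie in `[-m, m]`, which makes this finite set computable. -/
def shell (c : ZMod 3) (m : ℕ) : Finset O :=
  (Finset.filter (fun p : ℤ × ℤ =>
      (p.1 - p.2 : ZMod 3) = c ∧ p.1 ^ 2 + p.1 * p.2 + p.2 ^ 2 = (m : ℤ))
    (Finset.Icc (-m : ℤ) m ×ˢ Finset.Icc (-m : ℤ) m)).map coords.symm.toEmbedding

lemma mem_shell {c : ZMod 3} {m : ℕ} {z : O} : z ∈ shell c m ↔ residue z = c ∧ norm z = m := by
  obtain ⟨p, rfl⟩ := coords.symm.surjective z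
  have hnorm : norm (coords.symm p) = m ↔ p.1 ^ 2 + p.1 * p.2 + p.2 ^ 2 = m := by
    rw [coords_symm_apply, ← norm_add_mul_ω, Nat.cast_inj]
  have hbound (h : p.1 ^ 2 + p.1 * p.2 + p.2 ^ 2 = m) :
      (-m ≤ p.1 ∧ p.1 ≤ m) ∧ -m ≤ p.2 ∧ p.2 ≤ m := by
    have hm : (m : ℤ) ≤ m ^ 2 := by exact_mod_cast Nat.le_self_pow two_ne_zero m
    constructor <;> refine abs_le.1 (abs_le_of_sq_le_sq ?_ m.cast_nonneg) <;>
      nlinarith [sq_nonneg (p.1 + 2 * p.2), sq_nonneg (2 * p.1 + p.2), sq_nonneg p.1,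
        sq_nonneg p.2]
  rw [shell, ← Equiv.coe_toEmbedding, Finset.mem_map', Finset.mem_filter, Finset.mem_product,
    Finset.mem_Icc, Finset.mem_Icc, Equiv.coe_toEmbedding, hnorm, coords_symm_apply,
    residue_add_mul_ω]
  tauto

lemma card_shell (c : ZMod 3) {m : ℕ} (hm : m ≤ 6) :
    (shell c m).card = if c = 0 then (if m = 0 then 1 else if m = 3 then 6 else 0)
      else (if m = 1 ∨ m = 4 then 3 else 0) := by
  rw [shell, Finset.card_map]
  revert c
  interval_cases m <;> decide

lemma ncard_residue_mem_and_sum_norm_eq {ι : Type*} [Fintype ι] [DecidableEq ι]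
    (C : Finset (ι → ZMod 3)) (n : ℕ) :
    {y : ι → O | residue ∘ y ∈ C ∧ ∑ i, norm (y i) = n}.ncard =
      ∑ c ∈ C, ∑ ν ∈ Finset.univ.piAntidiag n, ∏ i, (shell (c i) (ν i)).card := by
  set shells : (ι → ZMod 3) × (ι → ℕ) → Finset (ι → O) :=
    fun p => Fintype.piFinset fun i => shell (p.1 i) (p.2 i)
  have mem_shells {p y} : y ∈ shells p ↔ p = (residue ∘ y, norm ∘ y) := by
    simp only [shells, Fintype.mem_piFinset, mem_shell, Prod.ext_iff, funext_iff, forall_and,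
      Function.comp_apply, eq_comm]
  have hset : {y : ι → O | residue ∘ y ∈ C ∧ ∑ i, norm (y i) = n} =
      ((C ×ˢ Finset.univ.piAntidiag n).biUnion shells : Finset (ι → O)) := by
    ext y
    simp [mem_shells]
  have hdisj : ((C ×ˢ Finset.univ.piAntidiag n : Finset ((ι → ZMod 3) × (ι → ℕ))) :
      Set ((ι → ZMod 3) × (ι → ℕ))).PairwiseDisjoint shells := fun p _ p' _ hne =>
    Finset.disjoint_left.2 fun y hy hy' => hne ((mem_shells.1 hy).trans (mem_shells.1 hy').symm)
  rw [hset, Set.ncard_coe_finset, Finset.card_biUnion hdisj, Finset.sum_product]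
  simp only [shells, Fintype.card_piFinset]

/-! ### Triflections of skew-Hermitian forms -/

variable {M : Type*} [AddCommGroup M] [Module O M]

/-- Skew-Hermitian sesquilinear forms. An `𝒪`-lattice is studied through `q = θ⁻¹ ψ`, which is
`𝒪`-valued because `ψ` takes its values in `θ𝒪`; thus `ψ x x = 3` reads `q x x = -θ`. -/
def IsSkewHermitian (q : M →ₗ[O] M →ₛₗ[conj] O) : Prop :=
  ∀ x y, q y x = -conj (q x y)

/-- Positive definiteness of the Hermitian form `θ q`. Its values `θ q x x` are rational integers
when `q` is skew-Hermitian, so positivity is expressed without ordering `𝒪`. -/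
def IsPosDef (q : M →ₗ[O] M →ₛₗ[conj] O) : Prop :=
  ∀ x ≠ 0, ∃ n : ℕ, 0 < n ∧ θ * q x x = n

/-- The group of linear automorphisms preserving `q`. -/
def unitarySubgroup (q : M →ₗ[O] M →ₛₗ[conj] O) : Subgroup (M ≃ₗ[O] M) where
  carrier := {g | ∀ x y, q (g x) (g y) = q x y}
  one_mem' _ _ := rfl
  mul_mem' hg hh x y := (hg _ _).trans (hh x y)
  inv_mem' {g} hg x y := by
    simpa only [LinearEquiv.coe_inv, LinearEquiv.apply_symm_apply] using
      (hg (g.symm x) (g.symm y)).symm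

lemma mem_unitarySubgroup {q : M →ₗ[O] M →ₛₗ[conj] O} {g : M ≃ₗ[O] M} :
    g ∈ unitarySubgroup q ↔ ∀ x y, q (g x) (g y) = q x y :=
  Iff.rfl

/-- The complex reflection of order three `x ↦ x - ω q(x, a) a` in a vector `a` with
`ψ a a = 3`. -/
def triflection (q : M →ₗ[O] M →ₛₗ[conj] O) (a : M) (ha : q a a = -θ) : M ≃ₗ[O] M :=
  LinearEquiv.ofLinearMap
    (LinearMap.id - (ω • q.flip a).smulRight a)
    (LinearMap.id + (conj ω • q.flip a).smulRight a)
    (by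
      ext x
      change x + (conj ω * q x a) • a - (ω * q (x + (conj ω * q x a) • a) a) • a = x
      rw [map_add, map_smul, LinearMap.add_apply, LinearMap.smul_apply, smul_eq_mul, ha, θ]
      match_scalars
      · ring
      · linear_combination (ω - conj ω) * q x a * ω_mul_conj_ω)
    (by
      ext x
      change x - (ω * q x a) • a + (conj ω * q (x - (ω * q x a) • a) a) • a = x
      rw [map_sub, map_smul, LinearMap.sub_apply, LinearMap.smul_apply, smul_eq_mul, ha, θ]
      match_scalars
      · ring
      · linear_combination (ω - conj ω) * q x a * ω_mul_conj_ω)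

section Forms

variable {q : M →ₗ[O] M →ₛₗ[conj] O} {a b x : M} {ha : q a a = -θ} {hb : q b b = -θ}
  {H : Subgroup (M ≃ₗ[O] M)} {u : O}

lemma triflection_apply : triflection q a ha x = x - (ω * q x a) • a :=
  rfl

lemma triflection_symm_apply : (triflection q a ha).symm x = x + (conj ω * q x a) • a :=
  rfl

lemma triflection_apply_of_eq_zero (hx : q x a = 0) : triflection q a ha x = x := by
  rw [triflection_apply, hx, mul_zero, zero_smul, sub_zero]

lemma triflection_mem_unitarySubgroup (hq : IsSkewHermitian q) :
    triflection q a ha ∈ unitarySubgroup q := by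
  intro x y
  have hy : conj (q y a) = -q a y := by rw [hq y a, neg_neg]
  simp only [triflection_apply, map_sub, map_smul, map_smulₛₗ, LinearMap.sub_apply,
    LinearMap.smul_apply, smul_eq_mul, map_mul, ha, hy]
  rw [θ]
  linear_combination (ω - conj ω) * q x a * q a y * ω_mul_conj_ω

lemma IsSkewHermitian.norm_swap (hq : IsSkewHermitian q) (x y : M) :
    norm (q y x) = norm (q x y) := by
  rw [hq, norm_neg, norm_conj]

lemma triflection_apply_triflection_apply (hq : IsSkewHermitian q) (hab : norm (q a b) = 1) :
    triflection q a ha (triflection q b hb a) = (-ω * q a b) • b := by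
  have hN : q a b * conj (q a b) = 1 := by rw [mul_conj, hab, Nat.cast_one]
  simp only [triflection_apply, map_sub, map_smul, ha, hq a b]
  match_scalars
  · linear_combination ω * θ_eq + ω_sq - ω ^ 2 * hN
  · ring

lemma triflection_symm_apply_triflection_symm_apply (hq : IsSkewHermitian q)
    (hab : norm (q a b) = 1) :
    (triflection q a ha).symm ((triflection q b hb).symm a) = (-ω * q a b) • ω • b := by
  have hN : q a b * conj (q a b) = 1 := by rw [mul_conj, hab, Nat.cast_one]
  simp only [triflection_symm_apply, map_add, map_smul, ha, hq a b, conj_ω]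
  match_scalars
  · linear_combination (ω - 1) * θ_eq + ω_sq - (1 - ω) ^ 2 * hN
  · linear_combination q a b * ω_sq

lemma orbit_smul_eq_orbit_smul {y : M} (c : O)
    (h : MulAction.orbit H x = MulAction.orbit H y) :
    MulAction.orbit H (c • x) = MulAction.orbit H (c • y) := by
  obtain ⟨g, rfl⟩ := MulAction.orbit_eq_iff.1 h
  exact MulAction.orbit_eq_iff.2 ⟨g, map_smul (g : M ≃ₗ[O] M) c y⟩

lemma orbit_eq_orbit_smul (hq : IsSkewHermitian q) (haH : triflection q a ha ∈ H)
    (hbH : triflection q b hb ∈ H) (hab : norm (q a b) = 1) :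
    MulAction.orbit H a = MulAction.orbit H ((-ω * q a b) • b) :=
  (MulAction.orbit_eq_iff.2 ⟨⟨_, mul_mem haH hbH⟩,
    triflection_apply_triflection_apply (ha := ha) (hb := hb) hq hab⟩).symm

lemma orbit_ω_smul (hq : IsSkewHermitian q) (haH : triflection q a ha ∈ H)
    (hbH : triflection q b hb ∈ H) (hab : norm (q a b) = 1) :
    MulAction.orbit H (ω • b) = MulAction.orbit H b := by
  have hinv : MulAction.orbit H a = MulAction.orbit H ((-ω * q a b) • ω • b) :=
    (MulAction.orbit_eq_iff.2 ⟨⟨_, mul_mem (inv_mem haH) (inv_mem hbH)⟩,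
      triflection_symm_apply_triflection_symm_apply (ha := ha) (hb := hb) hq hab⟩).symm
  have hunit : conj (-ω * q a b) * (-ω * q a b) = 1 := by
    rw [mul_comm, mul_conj, map_mul, norm_neg, norm_ω, hab, mul_one, Nat.cast_one]
  simpa only [smul_smul _ _ (_ • b), smul_smul _ _ b, hunit, one_smul, ← mul_assoc, one_mul] using
    orbit_smul_eq_orbit_smul (conj (-ω * q a b))
      (hinv.symm.trans (orbit_eq_orbit_smul hq haH hbH hab))

lemma orbit_eq_orbit_unit_smul (hq : IsSkewHermitian q) (haH : triflection q a ha ∈ H)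
    (hbH : triflection q b hb ∈ H) (hab : norm (q a b) = 1) (hu : norm u = 1) :
    MulAction.orbit H a = MulAction.orbit H (u • b) := by
  have unit_smul {w : O} (hw : norm w = 1) :
      MulAction.orbit H (w • b) = MulAction.orbit H b := by
    obtain ⟨n, rfl⟩ := exists_eq_ω_pow hw
    clear hw
    induction n with
    | zero => rw [pow_zero, one_smul]
    | succ n ih =>
      rw [pow_succ' ω n, mul_smul, orbit_smul_eq_orbit_smul ω ih, orbit_ω_smul hq haH hbH hab]
  rw [orbit_eq_orbit_smul hq haH hbH hab, unit_smul hu, unit_smul]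
  rw [map_mul, norm_neg, norm_ω, hab]

lemma IsPosDef.exists_natCast_eq (hpos : IsPosDef q) (x : M) : ∃ n : ℕ, θ * q x x = n := by
  obtain rfl | hx := eq_or_ne x 0
  · exact ⟨0, by simp⟩
  · exact (hpos x hx).imp fun _ h => h.2

/-- The Cauchy–Schwarz inequality for `x` and `b`, obtained from the positivity of `θ` times the
component of `x` orthogonal to `b`. -/
lemma IsPosDef.norm_le_three (hpos : IsPosDef q) (hq : IsSkewHermitian q) (hx : q x x = -θ)
    (hb : q b b = -θ) : norm (q x b) ≤ 3 := by
  obtain ⟨n, hn⟩ := hpos.exists_natCast_eq (θ • x + q x b • b)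
  have h : (n + 3 * norm (q x b) : O) = 9 := by
    rw [← hn, ← mul_conj]
    simp only [map_add, map_smul, map_smulₛₗ, LinearMap.add_apply, LinearMap.smul_apply,
      smul_eq_mul, hx, hb, hq x b, conj_θ]
    linear_combination (θ * θ - 3 + q x b * conj (q x b)) * θ_mul_θ
  have h' : n + 3 * norm (q x b) = 9 := by exact_mod_cast h
  lia

lemma IsPosDef.eq_zero_or_norm_eq_one_or_eq_unit_smul (hpos : IsPosDef q)
    (hq : IsSkewHermitian q) (hx : q x x = -θ) (hb : q b b = -θ) :
    q x b = 0 ∨ norm (q x b) = 1 ∨ ∃ u, norm u = 1 ∧ x = u • b := by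
  have hle := hpos.norm_le_three hq hx hb
  have hne : norm (q x b) ≠ 2 := by
    intro h
    have hsq := natCast_norm_eq_residue_sq (q x b)
    rw [h] at hsq
    exact absurd hsq (by generalize residue (q x b) = c; revert c; decide)
  obtain h | h | h : norm (q x b) = 0 ∨ norm (q x b) = 1 ∨ norm (q x b) = 3 := by lia
  · exact .inl (norm_eq_zero.1 h)
  · exact .inr (.inl h)
  · obtain ⟨w, hw⟩ : θ ∣ q x b := by
      rw [← residue_eq_zero_iff, residue_eq_zero_iff_three_dvd_norm, h]
    have hw₁ : norm w = 1 := by simpa [hw] using h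
    have hself : q (x + w • b) (x + w • b) = 0 := by
      have hwN : w * conj w = 1 := by rw [mul_conj, hw₁, Nat.cast_one]
      simp only [map_add, map_smul, map_smulₛₗ, LinearMap.add_apply, LinearMap.smul_apply,
        smul_eq_mul, hx, hb, hq x b, hw, map_mul, conj_θ]
      linear_combination θ * hwN
    refine .inr (.inr ⟨-w, by rwa [norm_neg], ?_⟩)
    rw [neg_smul, ← add_eq_zero_iff_eq_neg]
    by_contra hne
    obtain ⟨n, hn, hqn⟩ := hpos _ hne
    rw [hself, mul_zero, eq_comm, Nat.cast_eq_zero] at hqn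
    exact hn.ne' hqn

theorem orbit_eq_orbit_chain {m : ℕ} {s : Fin (m + 2) → M} (hq : IsSkewHermitian q)
    (hpos : IsPosDef q) (hs : ∀ i, q (s i) (s i) = -θ)
    (hsH : ∀ i, triflection q (s i) (hs i) ∈ H)
    (hchain : ∀ i : Fin (m + 1), norm (q (s i.castSucc) (s i.succ)) = 1)
    (hx : q x x = -θ) (hxH : triflection q x hx ∈ H) (hxs : ∃ i, q x (s i) ≠ 0) :
    MulAction.orbit H x = MulAction.orbit H (s 0) := by
  have orbit_unit_smul (i : Fin (m + 2)) :
      ∀ {u : O}, norm u = 1 → MulAction.orbit H (u • s i) = MulAction.orbit H (s 0) := by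
    induction i using Fin.induction with
    | zero =>
      intro u hu
      have h : norm (q (s (Fin.succ 0)) (s (Fin.castSucc 0))) = 1 := by
        rw [hq.norm_swap]; exact hchain 0
      have h₁ := orbit_eq_orbit_unit_smul hq (hsH _) (hsH _) h hu
      have h₂ := orbit_eq_orbit_unit_smul hq (hsH _) (hsH _) h norm.map_one
      rw [one_smul] at h₂
      exact h₁.symm.trans h₂
    | succ i ih =>
      intro u hu
      rw [← orbit_eq_orbit_unit_smul hq (hsH _) (hsH _) (hchain i) hu, ← ih norm.map_one, one_smul]
  obtain ⟨i, hi⟩ := hxs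
  obtain h | h | ⟨u, hu, rfl⟩ := hpos.eq_zero_or_norm_eq_one_or_eq_unit_smul hq hx (hs i)
  · exact absurd h hi
  · rw [orbit_eq_orbit_unit_smul hq hxH (hsH i) h norm.map_one]
    exact orbit_unit_smul i norm.map_one
  · exact orbit_unit_smul i hu

end Forms

/-! ### The lattices `Λᵏ` -/

/-- The Gram matrix of `θ⁻¹ ψ` on the basis `r₁, …, r_k` of `Λᵏ`. -/
def skewGram (k : ℕ) : Matrix (Fin k) (Fin k) O := fun i j =>
  if i = j then -θ
  else if (i : ℕ) + 1 = (j : ℕ) then 1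
  else if (j : ℕ) + 1 = (i : ℕ) then -1
  else 0

lemma θ_mul_skewGram {k : ℕ} (i j : Fin k) : θ * skewGram k i j = gram k i j := by
  rw [skewGram, gram]
  split_ifs
  · rw [mul_neg, θ_mul_θ, neg_neg]
  · rw [mul_one]
  · rw [conj_θ, mul_neg_one]
  · rw [mul_zero]

lemma conj_skewGram {k : ℕ} (i j : Fin k) : conj (skewGram k i j) = -skewGram k j i := by
  obtain rfl | hne := eq_or_ne i j
  · simp [skewGram, conj_θ]
  · by_cases h : (i : ℕ) + 1 = j
    · have h' : (j : ℕ) + 1 ≠ i := by lia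
      simp [skewGram, hne, hne.symm, h, h']
    · simp only [skewGram, if_neg hne, if_neg hne.symm, if_neg h]
      split_ifs <;> simp

/-- The form `θ⁻¹ ψ` of `Λᵏ`. -/
def skewForm (k : ℕ) : (Fin k → O) →ₗ[O] (Fin k → O) →ₛₗ[conj] O :=
  Matrix.toLinearMapₛₗ₂' O (RingHom.id O) conj (skewGram k)

lemma skewForm_apply {k : ℕ} (x y : Fin k → O) :
    skewForm k x y = ∑ i, ∑ j, x i * (conj (y j) * skewGram k i j) :=
  Matrix.toLinearMapₛₗ₂'_apply ..

lemma θ_mul_skewForm {k : ℕ} (x y : Fin k → O) : θ * skewForm k x y = psi k x y := by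
  simp only [skewForm_apply, psi, Finset.mul_sum, ← θ_mul_skewGram]
  exact Finset.sum_congr rfl fun i _ => Finset.sum_congr rfl fun j _ => by ring

lemma isSkewHermitian_skewForm (k : ℕ) : IsSkewHermitian (skewForm k) := by
  intro x y
  simp only [skewForm_apply, map_sum, map_mul, conj_conj, conj_skewGram, ← Finset.sum_neg_distrib]
  rw [Finset.sum_comm]
  exact Finset.sum_congr rfl fun i _ => Finset.sum_congr rfl fun j _ => by ring

lemma isUnitary_iff_mem_unitarySubgroup {k : ℕ} {g : (Fin k → O) ≃ₗ[O] (Fin k → O)} :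
    IsUnitary k g ↔ g ∈ unitarySubgroup (skewForm k) := by
  simp only [IsUnitary, mem_unitarySubgroup, ← θ_mul_skewForm, mul_right_inj' θ_ne_zero]

lemma psi_eq_three_iff {k : ℕ} {x y : Fin k → O} : psi k x y = 3 ↔ skewForm k x y = -θ := by
  rw [← θ_mul_skewForm, ← mul_right_inj' θ_ne_zero (b := skewForm k x y), mul_neg, θ_mul_θ, neg_neg]

lemma skewForm_r {k : ℕ} (i j : Fin k) : skewForm k (r k i) (r k j) = skewGram k i j :=
  Matrix.toLinearMapₛₗ₂'_single ..

lemma skewForm_r_self {k : ℕ} (i : Fin k) : skewForm k (r k i) (r k i) = -θ := by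
  rw [skewForm_r, skewGram, if_pos rfl]

lemma norm_skewForm_r_castSucc_succ {k : ℕ} (i : Fin k) :
    norm (skewForm (k + 1) (r (k + 1) i.castSucc) (r (k + 1) i.succ)) = 1 := by
  rw [skewForm_r, skewGram, if_neg i.castSucc_lt_succ.ne, Fin.val_castSucc, Fin.val_succ,
    if_pos rfl, map_one]

lemma skewForm_eq_zero_of_forall_r {k : ℕ} {x : Fin k → O} (h : ∀ i, skewForm k x (r k i) = 0) :
    skewForm k x = 0 :=
  (Pi.basisFun O (Fin k)).ext fun i => by simpa [r] using h i

/-! ### Tetracode coordinates on `Λ⁴` -/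

/-- The coordinates which embed `Λ⁴` isometrically into the standard Hermitian lattice `𝒪⁴`. They
send `r₁, r₂, r₃, r₄` to `(θ, 0, 0, 0)`, `(1, 1, 1, 0)`, `(0, -θ, 0, 0)`, `(0, -1, 1, 1)`. -/
def standardCoords : (Fin 4 → O) →ₗ[O] (Fin 4 → O) :=
  Matrix.toLin' !![θ, 1, 0, 0; 0, 1, -θ, -1; 0, 1, 0, 1; 0, 0, 0, 1]

lemma standardCoords_apply (x : Fin 4 → O) :
    standardCoords x = ![θ * x 0 + x 1, x 1 - θ * x 2 - x 3, x 1 + x 3, x 3] := by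
  ext i
  fin_cases i <;> simp [standardCoords, Matrix.mulVec, dotProduct, Fin.sum_univ_four]
  ring

lemma psi_four_eq_sum (x y : Fin 4 → O) :
    psi 4 x y = ∑ i, standardCoords x i * conj (standardCoords y i) := by
  have hgram : gram 4 = !![3, θ, 0, 0; -θ, 3, θ, 0; 0, -θ, 3, θ; 0, 0, -θ, 3] := by
    ext i j
    fin_cases i <;> fin_cases j <;> simp [gram, conj_θ]
  simp only [psi, hgram, Fin.sum_univ_four, standardCoords_apply, Matrix.of_apply, Matrix.cons_val,
    map_add, map_sub, map_mul, conj_θ]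
  linear_combination (x 0 * conj (y 0) + x 2 * conj (y 2)) * θ_mul_θ

lemma psi_four_self_eq_sum_norm (x : Fin 4 → O) :
    psi 4 x x = (∑ i, norm (standardCoords x i) : ℕ) := by
  rw [psi_four_eq_sum, Nat.cast_sum]
  exact Finset.sum_congr rfl fun i _ => mul_conj _

lemma standardCoords_injective : Function.Injective standardCoords := by
  rw [← LinearMap.ker_eq_bot, LinearMap.ker_eq_bot']
  intro x hx
  rw [standardCoords_apply] at hx
  have h (i) := congrFun hx i
  have h₃ : x 3 = 0 := h 3
  have h₁ : x 1 = 0 := by simpa [h₃] using h 2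
  have h₀ : x 0 = 0 := by simpa [h₁, θ_ne_zero] using h 0
  have h₂ : x 2 = 0 := by simpa [h₁, h₃, θ_ne_zero] using h 1
  ext i
  fin_cases i <;> assumption

/-- The ternary tetracode, with words `(s, s - t, s + t, t)`. It consists of the residues modulo `θ`
of the vectors of `Λ⁴` in standard coordinates. -/
def tetracode : Finset (Fin 4 → ZMod 3) :=
  {c | c 0 + c 1 + c 2 = 0 ∧ c 2 + c 3 = c 1}

lemma mem_tetracode {c : Fin 4 → ZMod 3} :
    c ∈ tetracode ↔ c 0 + c 1 + c 2 = 0 ∧ c 2 + c 3 = c 1 := by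
  simp [tetracode]

lemma zero_mem_tetracode : 0 ∈ tetracode := by
  simp [mem_tetracode]

lemma neg_mem_tetracode {c : Fin 4 → ZMod 3} (hc : c ∈ tetracode) : -c ∈ tetracode := by
  simp only [mem_tetracode, Pi.neg_apply] at hc ⊢
  exact ⟨by linear_combination -hc.1, by linear_combination -hc.2⟩

lemma mem_range_standardCoords_iff {y : Fin 4 → O} :
    y ∈ Set.range standardCoords ↔ residue ∘ y ∈ tetracode := by
  have hθ : residue θ = 0 := residue_eq_zero_iff.2 dvd_rfl
  have three : (3 : ZMod 3) = 0 := rfl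
  rw [mem_tetracode]
  constructor
  · rintro ⟨x, rfl⟩
    simp only [standardCoords_apply, Function.comp_apply, Matrix.cons_val, map_add, map_sub,
      map_mul, hθ, zero_mul, zero_add, sub_zero]
    constructor
    · linear_combination residue (x 1) * three
    · linear_combination residue (x 3) * three
  · rintro ⟨h₀, h₁⟩
    obtain ⟨x₀, hx₀⟩ : θ ∣ y 0 - (y 2 - y 3) := residue_eq_zero_iff.1 <| by
      simp only [map_sub, Function.comp_apply] at *
      linear_combination h₀ + h₁ - residue (y 2) * three
    obtain ⟨x₂, hx₂⟩ : θ ∣ y 2 - y 3 - y 3 - y 1 := residue_eq_zero_iff.1 <| by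
      simp only [map_sub, Function.comp_apply] at *
      linear_combination h₁ - residue (y 3) * three
    refine ⟨![x₀, y 2 - y 3, x₂, y 3], ?_⟩
    rw [standardCoords_apply]
    ext i
    fin_cases i
    · simp [← hx₀]
    · simp only [Fin.mk_one, Matrix.cons_val, ← hx₂]; ring
    · simp
    · rfl

lemma isPosDef_skewForm_four : IsPosDef (skewForm 4) := by
  intro x hx
  refine ⟨∑ i, norm (standardCoords x i), ?_, by rw [θ_mul_skewForm, psi_four_self_eq_sum_norm]⟩
  obtain ⟨i, hi⟩ := Function.ne_iff.1 ((map_ne_zero_iff _ standardCoords_injective).2 hx)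
  exact Finset.sum_pos' (fun _ _ => Nat.zero_le _)
    ⟨i, Finset.mem_univ i, Nat.pos_of_ne_zero (norm_eq_zero.not.2 hi)⟩

lemma ncard_psi_self_eq {n : ℕ} (hn : n ≤ 6) :
    {x : Fin 4 → O | psi 4 x x = n}.ncard =
      ∑ c ∈ tetracode, ∑ ν ∈ Finset.univ.piAntidiag n, ∏ i,
        if c i = 0 then (if ν i = 0 then 1 else if ν i = 3 then 6 else 0)
        else (if ν i = 1 ∨ ν i = 4 then 3 else 0) := by
  have himage : standardCoords '' {x | psi 4 x x = n} =
      {y | residue ∘ y ∈ tetracode ∧ ∑ i, norm (y i) = n} := by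
    ext y
    simp only [← mem_range_standardCoords_iff, Set.mem_image, Set.mem_ofPred_eq, Set.mem_range,
      psi_four_self_eq_sum_norm, Nat.cast_inj]
    constructor
    · rintro ⟨x, hx, rfl⟩
      exact ⟨⟨x, rfl⟩, hx⟩
    · rintro ⟨⟨x, rfl⟩, hx⟩
      exact ⟨x, hx, rfl⟩
  rw [← Set.ncard_image_of_injective _ standardCoords_injective, himage,
    ncard_residue_mem_and_sum_norm_eq]
  refine Finset.sum_congr rfl fun c _ => Finset.sum_congr rfl fun ν hν =>
    Finset.prod_congr rfl fun i _ => card_shell (c i) (le_trans ?_ hn)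
  rw [← (Finset.mem_piAntidiag.1 hν).1]
  exact Finset.single_le_sum (fun _ _ => Nat.zero_le _) (Finset.mem_univ i)

lemma ncard_psi_self_eq_three : {x : Fin 4 → O | psi 4 x x = 3}.ncard = 240 := by
  refine (ncard_psi_self_eq (n := 3) (by norm_num)).trans ?_
  decide +kernel

lemma ncard_psi_self_eq_six : {x : Fin 4 → O | psi 4 x x = 6}.ncard = 2160 := by
  refine (ncard_psi_self_eq (n := 6) (by norm_num)).trans ?_
  decide +kernel

/-! ### Transitivity on short vectors -/

lemma orbit_eq_orbit_r_zero {k : ℕ} (hpos : IsPosDef (skewForm (k + 2))) {x : Fin (k + 2) → O}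
    (hx : skewForm (k + 2) x x = -θ) :
    MulAction.orbit (unitarySubgroup (skewForm (k + 2))) x =
      MulAction.orbit (unitarySubgroup (skewForm (k + 2))) (r (k + 2) 0) := by
  have hq := isSkewHermitian_skewForm (k + 2)
  refine orbit_eq_orbit_chain hq hpos skewForm_r_self
    (fun _ => triflection_mem_unitarySubgroup hq) norm_skewForm_r_castSucc_succ hx
    (triflection_mem_unitarySubgroup hq) ?_
  by_contra! h
  rw [skewForm_eq_zero_of_forall_r h, LinearMap.zero_apply, zero_eq_neg] at hx
  exact θ_ne_zero hx

lemma norm_eq_of_le_six {z : O} (hz : norm z ≤ 6) :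
    norm z = 0 ∨ norm z = 1 ∨ norm z = 3 ∨ norm z = 4 := by
  have hpos : 0 < (shell (residue z) (norm z)).card :=
    Finset.card_pos.2 ⟨z, mem_shell.2 ⟨rfl, rfl⟩⟩
  rw [card_shell _ hz] at hpos
  split_ifs at hpos <;> tauto

lemma exists_perm_eq_four_one_one_zero {ν : Fin 4 → ℕ} (hν : ∀ i, ν i ∈ ({0, 1, 4} : Finset ℕ))
    (hsum : ∑ i, ν i = 6) : ∃ σ : Equiv.Perm (Fin 4), ∀ i, ν (σ i) = ![4, 1, 1, 0] i := by
  have h : ∀ ν ∈ Fintype.piFinset fun _ : Fin 4 => ({0, 1, 4} : Finset ℕ), ∑ i, ν i = 6 →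
      ∃ σ : Equiv.Perm (Fin 4), ∀ i, ν (σ i) = ![4, 1, 1, 0] i := by
    decide +kernel
  exact h ν (Fintype.mem_piFinset.2 hν) hsum

/-- With `ζ = ω²` a cube root of unity, `y = (2u, v, w, 0)` is matched with `a = (u, -ζv, -ζ̄w, 0)`;
then `⟨y, a⟩ = 2 - ζ̄ - ζ = 3`. -/
lemma exists_residue_eq_neg_of_norm_eq {y : Fin 4 → O} {σ : Equiv.Perm (Fin 4)}
    (hσ : ∀ i, norm (y (σ i)) = ![4, 1, 1, 0] i) :
    ∃ a : Fin 4 → O, residue ∘ a = -(residue ∘ y) ∧ ∑ i, norm (a i) = 3 ∧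
      ∑ i, y i * conj (a i) = 3 := by
  obtain ⟨u, hu⟩ := two_dvd_of_two_dvd_norm (z := y (σ 0)) (by simp [hσ])
  have hu₁ : norm u = 1 := by simpa [hu] using hσ 0
  have h₃ : y (σ 3) = 0 := norm_eq_zero.1 (hσ 3)
  have huN : u * conj u = 1 := by rw [mul_conj, hu₁, Nat.cast_one]
  set a : Fin 4 → O := ![u, -ω ^ 2 * y (σ 1), -conj ω ^ 2 * y (σ 2), 0] with ha
  have hres (i) : residue (a i) = -residue (y (σ i)) := by
    fin_cases i
    · have three : (3 : ZMod 3) = 0 := rfl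
      simp only [ha, hu, map_mul, map_ofNat, Fin.zero_eta, Matrix.cons_val]
      linear_combination residue u * three
    · simp [ha]
    · simp [ha]
    · simp [ha, h₃]
  refine ⟨a ∘ σ.symm, ?_, ?_, ?_⟩
  · ext j
    obtain ⟨i, rfl⟩ := σ.surjective j
    simpa using hres i
  · rw [← Equiv.sum_comp σ]
    simp [Fin.sum_univ_four, ha, hu₁, hσ]
  · rw [← Equiv.sum_comp σ]
    have h₁ : y (σ 1) * conj (y (σ 1)) = 1 := by simp [mul_conj, hσ]
    have h₂ : y (σ 2) * conj (y (σ 2)) = 1 := by simp [mul_conj, hσ]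
    simp only [Fin.sum_univ_four, Function.comp_apply, Equiv.symm_apply_apply, ha, Matrix.cons_val,
      hu, h₃, map_mul, map_neg, map_pow, conj_conj]
    rw [conj_ω]
    linear_combination 2 * huN - (1 - ω) ^ 2 * h₁ - ω ^ 2 * h₂ - 2 * ω_sq

lemma exists_mem_tetracode_of_sum_norm_eq_six {y : Fin 4 → O} (hy : residue ∘ y ∈ tetracode)
    (hsum : ∑ i, norm (y i) = 6) :
    ∃ a : Fin 4 → O, residue ∘ a ∈ tetracode ∧ ∑ i, norm (a i) = 3 ∧
      ∑ i, y i * conj (a i) = 3 := by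
  by_cases h : ∃ i, norm (y i) = 3
  · obtain ⟨i, hi⟩ := h
    have hres : residue ∘ Pi.single i (y i) = 0 := by
      have hi' : residue (y i) = 0 := by rw [residue_eq_zero_iff_three_dvd_norm, hi]
      ext j
      obtain rfl | hj := eq_or_ne j i
      · simp [hi']
      · simp [hj]
    refine ⟨Pi.single i (y i), hres ▸ zero_mem_tetracode, ?_, ?_⟩
    · rw [Fintype.sum_eq_single i fun j hj => by simp [hj], Pi.single_eq_same, hi]
    · rw [Fintype.sum_eq_single i fun j hj => by simp [hj], Pi.single_eq_same, mul_conj, hi,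
        Nat.cast_ofNat]
  · push Not at h
    have hν (i) : norm (y i) ∈ ({0, 1, 4} : Finset ℕ) := by
      have hle : norm (y i) ≤ 6 :=
        hsum ▸ Finset.single_le_sum (f := fun i => norm (y i)) (fun _ _ => Nat.zero_le _)
          (Finset.mem_univ i)
      obtain h' | h' | h' | h' := norm_eq_of_le_six hle
      · simp [h']
      · simp [h']
      · exact absurd h' (h i)
      · simp [h']
    obtain ⟨σ, hσ⟩ := exists_perm_eq_four_one_one_zero hν hsum
    obtain ⟨a, hres, hnorm, hinner⟩ := exists_residue_eq_neg_of_norm_eq hσ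
    exact ⟨a, hres ▸ neg_mem_tetracode hy, hnorm, hinner⟩

lemma exists_orthogonal_decomposition {x : Fin 4 → O} (hx : psi 4 x x = 6) :
    ∃ a b, skewForm 4 a a = -θ ∧ skewForm 4 b b = -θ ∧ skewForm 4 b a = 0 ∧ x = a + b := by
  have hsum : ∑ i, norm (standardCoords x i) = 6 := by
    rw [psi_four_self_eq_sum_norm] at hx
    exact_mod_cast hx
  obtain ⟨_, hres, hnorm, hinner⟩ := exists_mem_tetracode_of_sum_norm_eq_six
    (mem_range_standardCoords_iff.1 ⟨x, rfl⟩) hsum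
  obtain ⟨a, rfl⟩ := mem_range_standardCoords_iff.2 hres
  have haa : skewForm 4 a a = -θ := by
    rw [← psi_eq_three_iff, psi_four_self_eq_sum_norm, hnorm, Nat.cast_ofNat]
  have hxa : skewForm 4 x a = -θ := by
    rw [← psi_eq_three_iff, psi_four_eq_sum, hinner]
  have hax : skewForm 4 a x = -θ := by
    rw [isSkewHermitian_skewForm, hxa, map_neg, neg_neg, conj_θ]
  have hxx : skewForm 4 x x = -2 * θ := by
    apply mul_left_cancel₀ θ_ne_zero
    rw [θ_mul_skewForm, hx]
    linear_combination 2 * θ_mul_θ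
  refine ⟨a, x - a, haa, ?_, ?_, (add_sub_cancel a x).symm⟩
  · simp only [map_sub, LinearMap.sub_apply, haa, hxa, hax, hxx]; ring
  · rw [map_sub, LinearMap.sub_apply, hxa, haa, sub_self]

/-- The vectors `r₃`, `r₄` and a third one which, together with `r₁`, span a sublattice of finite
index in `Λ⁴` and form a chain in the orthogonal complement of `r₁`. -/
def complementChain : Fin 3 → Fin 4 → O :=
  ![r 4 2, r 4 3, ![-1, θ, 1, 0]]

lemma standardCoords_r_zero : standardCoords (r 4 0) = ![θ, 0, 0, 0] := by
  simp [standardCoords_apply, r]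

lemma standardCoords_complementChain (i : Fin 3) :
    standardCoords (complementChain i) = ![![0, -θ, 0, 0], ![0, -1, 1, 1], ![0, 0, θ, 0]] i := by
  fin_cases i <;> simp [standardCoords_apply, complementChain, r]

lemma θ_mul_skewForm_complementChain (i j : Fin 3) :
    θ * skewForm 4 (complementChain i) (complementChain j) =
      !![3, θ, 0; -θ, 3, -θ; 0, θ, 3] i j := by
  rw [θ_mul_skewForm, psi_four_eq_sum, standardCoords_complementChain,
    standardCoords_complementChain]
  fin_cases i <;> fin_cases j <;> simp [Fin.sum_univ_four, conj_θ, θ_mul_θ]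
  norm_num

lemma skewForm_complementChain_self (i : Fin 3) :
    skewForm 4 (complementChain i) (complementChain i) = -θ := by
  rw [← psi_eq_three_iff, ← θ_mul_skewForm, θ_mul_skewForm_complementChain]
  fin_cases i <;> rfl

lemma norm_skewForm_complementChain (i : Fin 2) :
    norm (skewForm 4 (complementChain i.castSucc) (complementChain i.succ)) = 1 := by
  have h := congrArg norm (θ_mul_skewForm_complementChain i.castSucc i.succ)
  have h' : 3 * norm (skewForm 4 (complementChain i.castSucc) (complementChain i.succ)) = 3 := by
    rw [← norm_θ, ← map_mul, h]
    fin_cases i <;> simp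
  lia

lemma skewForm_complementChain_r_zero (i : Fin 3) :
    skewForm 4 (complementChain i) (r 4 0) = 0 := by
  rw [← mul_right_inj' θ_ne_zero, θ_mul_skewForm, psi_four_eq_sum, standardCoords_complementChain,
    standardCoords_r_zero]
  fin_cases i <;> simp [Fin.sum_univ_four]

lemma eq_zero_of_skewForm_complementChain_eq_zero {x : Fin 4 → O}
    (h₀ : skewForm 4 x (r 4 0) = 0) (h : ∀ i, skewForm 4 x (complementChain i) = 0) : x = 0 := by
  have hsum (i) : ∑ j, standardCoords x j * conj (standardCoords (complementChain i) j) = 0 := by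
    rw [← psi_four_eq_sum, ← θ_mul_skewForm, h, mul_zero]
  have hy₀ : standardCoords x 0 = 0 := by
    rw [← mul_right_inj' θ_ne_zero, θ_mul_skewForm, psi_four_eq_sum, standardCoords_r_zero] at h₀
    simpa [Fin.sum_univ_four, conj_θ, θ_ne_zero] using h₀
  have hy₁ : standardCoords x 1 = 0 := by
    simpa [standardCoords_complementChain, Fin.sum_univ_four, conj_θ, θ_ne_zero] using hsum 0
  have hy₂ : standardCoords x 2 = 0 := by
    simpa [standardCoords_complementChain, Fin.sum_univ_four, conj_θ, θ_ne_zero] using hsum 2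
  have hy₃ : standardCoords x 3 = 0 := by
    simpa [standardCoords_complementChain, Fin.sum_univ_four, hy₁, hy₂] using hsum 1
  rw [← map_eq_zero_iff _ standardCoords_injective]
  ext i
  fin_cases i <;> assumption

lemma orbit_eq_orbit_r_two {x : Fin 4 → O} (hx : skewForm 4 x x = -θ)
    (hx₀ : skewForm 4 x (r 4 0) = 0) :
    MulAction.orbit ↥(unitarySubgroup (skewForm 4) ⊓ MulAction.stabilizer _ (r 4 0)) x =
      MulAction.orbit ↥(unitarySubgroup (skewForm 4) ⊓ MulAction.stabilizer _ (r 4 0)) (r 4 2) := by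
  have hq := isSkewHermitian_skewForm 4
  have triflection_mem {a : Fin 4 → O} (ha : skewForm 4 a a = -θ) (h : skewForm 4 a (r 4 0) = 0) :
      triflection _ a ha ∈ unitarySubgroup (skewForm 4) ⊓ MulAction.stabilizer _ (r 4 0) :=
    ⟨triflection_mem_unitarySubgroup hq,
      triflection_apply_of_eq_zero (by rw [hq, h, map_zero, neg_zero])⟩
  refine orbit_eq_orbit_chain hq isPosDef_skewForm_four skewForm_complementChain_self
    (fun i => triflection_mem _ (skewForm_complementChain_r_zero i)) norm_skewForm_complementChain
    hx (triflection_mem hx hx₀) ?_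
  by_contra! h
  rw [eq_zero_of_skewForm_complementChain_eq_zero hx₀ h, map_zero, zero_eq_neg] at hx
  exact θ_ne_zero hx

lemma orbit_eq_orbit_r_zero_add_r_two {x : Fin 4 → O} (hx : psi 4 x x = 6) :
    MulAction.orbit (unitarySubgroup (skewForm 4)) x =
      MulAction.orbit (unitarySubgroup (skewForm 4)) (r 4 0 + r 4 2) := by
  obtain ⟨a, b, ha, hb, hba, rfl⟩ := exists_orthogonal_decomposition hx
  obtain ⟨⟨g, hg⟩, hga : g a = r 4 0⟩ :=
    MulAction.orbit_eq_iff.1 (orbit_eq_orbit_r_zero isPosDef_skewForm_four ha).symm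
  rw [mem_unitarySubgroup] at hg
  have hgb : skewForm 4 (g b) (g b) = -θ := by rw [hg, hb]
  have hgb₀ : skewForm 4 (g b) (r 4 0) = 0 := by rw [← hga, hg, hba]
  obtain ⟨⟨h, hh, hh₀⟩, hhb : h (g b) = r 4 2⟩ :=
    MulAction.orbit_eq_iff.1 (orbit_eq_orbit_r_two hgb hgb₀).symm
  refine (MulAction.orbit_eq_iff.2 ⟨⟨h * g, mul_mem hh hg⟩, ?_⟩).symm
  change h (g (a + b)) = _
  have hh₀' : h (r 4 0) = r 4 0 := hh₀
  rw [map_add, map_add, hga, hhb, hh₀']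

lemma exists_isUnitary_of_orbit_eq {k : ℕ} {x y : Fin k → O}
    (h : MulAction.orbit (unitarySubgroup (skewForm k)) x =
      MulAction.orbit (unitarySubgroup (skewForm k)) y) :
    ∃ g : (Fin k → O) ≃ₗ[O] (Fin k → O), IsUnitary k g ∧ g x = y := by
  obtain ⟨⟨g, hg⟩, hgx⟩ := MulAction.orbit_eq_iff.1 h.symm
  exact ⟨g, isUnitary_iff_mem_unitarySubgroup.2 hg, hgx⟩

end EisensteinLattice

open EisensteinLattice

/-- The 𝒪-lattice `Λ⁴` contains exactly 240 3-vectors and exactly 2160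
6-vectors, and `U(Λ⁴)` acts transitively on the set of 3-vectors and on the set of
6-vectors. -/
theorem statement2 :
    Set.ncard {x : Fin 4 → O | psi 4 x x = 3} = 240 ∧
    Set.ncard {x : Fin 4 → O | psi 4 x x = 6} = 2160 ∧
    (∀ x y : Fin 4 → O, psi 4 x x = 3 → psi 4 y y = 3 →
      ∃ g : (Fin 4 → O) ≃ₗ[O] (Fin 4 → O), IsUnitary 4 g ∧ g x = y) ∧
    (∀ x y : Fin 4 → O, psi 4 x x = 6 → psi 4 y y = 6 →
      ∃ g : (Fin 4 → O) ≃ₗ[O] (Fin 4 → O), IsUnitary 4 g ∧ g x = y) := by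
  refine ⟨ncard_psi_self_eq_three, ncard_psi_self_eq_six, fun x y hx hy => ?_, fun x y hx hy => ?_⟩
  · apply exists_isUnitary_of_orbit_eq
    rw [orbit_eq_orbit_r_zero isPosDef_skewForm_four (psi_eq_three_iff.1 hx),
      orbit_eq_orbit_r_zero isPosDef_skewForm_four (psi_eq_three_iff.1 hy)]
  · apply exists_isUnitary_of_orbit_eq
    rw [orbit_eq_orbit_r_zero_add_r_two hx, orbit_eq_orbit_r_zero_add_r_two hy]

end
end

section
/- Let z := r₁ + r₂, a 6-vector of the 𝒪-lattice Λ⁴, and let U(Λ⁴)_z := {g ∈ U(Λ⁴) : g(z) = z}. Then: (i) for every nonzero c ∈ 𝒪, the group U(Λ⁴)_z acts transitively on the set of 3-vectors r of Λ⁴ with ψ(r,z) = c; (ii) the 𝒪-span of the 3-vectors of Λ⁴ perpendicular to z has 𝒪-basis (a, b, c) := (ω²r₁ + r₂, r₁ − θr₂ − 2r₃ + θr₄, r₄), where ψ(a,a) = ψ(b,b) = ψ(c,c) = 3, ψ(a,b) = ψ(a,c) = 0 and ψ(b,c) = θ (so this span is isomorphic to Λ¹ ⊥ Λ²); (iii)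 a 3-vector r perpendicular to z spans together with z a primitive (i.e. saturated) sublattice of Λ⁴ if and only if r lies in the span of b and c, and any two such 3-vectors are in the same U(Λ⁴)_z-orbit. -/
open Polynomial

noncomputable section

/-- A submodule `M` of an 𝒪-module is primitive (saturated): `M = (ℚ(ω)·M) ∩ L`, i.e.
`a • x ∈ M` with `a ≠ 0` implies `x ∈ M`. -/
def IsPrimitiveSubmodule {V : Type*} [AddCommGroup V] [Module O V]
    (M : Submodule O V) : Prop :=
  ∀ (a : O) (x : V), a ≠ 0 → a • x ∈ M → x ∈ M

/-!
Put `φ = ψ / θ`. A vector `x` of `Λ⁴` is determined by `d = φ(x, z)`, `e = φ(x, a)`, `f = φ(x, b)`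
and `g = φ(x, c)`, and `2 ψ(x, x) = |d|² + 2 |e|² + 3 H(f, g)`, where `H` is the form of the root
lattice `D₄`; the left side is `6` when `x` is a `3`-vector.

If `d ≠ 0`, then `|e|² ≤ 1` and `H(f, g) ≤ 1`. Triflections in `a` multiply `e` by cube roots of
unity, triflections in `b` and `c` bring `(f, g)` to the form `(f, 0)`, where `f` can still be
negated, and the congruences `θ ∣ d - e` and `2 ∣ g - f + d` show that `d` then fixes the orbit.

If `d = 0`, then either `H(f, g) = 0` and `x` is a multiple of `a`, or `e = 0` and `x` is in the
span of `b` and `c`. The span of `z` and a multiple of `a` is not saturated, because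
`z - a = (1 - ω²) r₁`. The `3`-vectors in the span of `b` and `c` form a single orbit by the braid
relation between the triflections in `b` and `c`, and one of them is `r₄`.
-/

namespace Eisenstein

/-! ### Eisenstein integers -/

/-- The Eisenstein ring in the coordinates `1, ω`. -/
def toQuadratic : O ≃ₐ[ℤ] QuadraticAlgebra ℤ (-1) 1 :=
  AlgEquiv.ofAlgHom
    (AdjoinRoot.liftAlgHom _ (Algebra.ofId ℤ _) QuadraticAlgebra.omega (by
      ext <;> simp [pow_two, QuadraticAlgebra.re_one, QuadraticAlgebra.im_one]))
    (QuadraticAlgebra.lift ⟨ω, by simp only [neg_smul, one_smul]; linear_combination ω_sq⟩)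
    (QuadraticAlgebra.algHom_ext (by simp [ω]))
    (AdjoinRoot.algHom_ext (by simp [ω]))

/-- The coefficient `p` of `p + q ω`, for integers `p` and `q`. -/
def re (x : O) : ℤ := (toQuadratic x).re

/-- The coefficient `q` of `p + q ω`, for integers `p` and `q`. -/
def im (x : O) : ℤ := (toQuadratic x).im

/-- The norm `x * conj x`, as an integer. -/
def norm : O →* ℤ := QuadraticAlgebra.norm.comp toQuadratic.toMonoidHom

@[simp] lemma toQuadratic_ω : toQuadratic ω = QuadraticAlgebra.omega := by
  simp [toQuadratic, ω]

lemma re_add_im_mul_ω (x : O) : (re x + im x * ω : O) = x :=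
  toQuadratic.injective (by ext <;> simp [re, im])

@[simp] lemma conj_ω : conj ω = 1 - ω := by simp [conj, ω]

lemma conj_two : conj 2 = 2 := map_ofNat conj 2

lemma θ_eq : θ = 2 * ω - 1 := by rw [θ, conj_ω]; ring

lemma θ_mul_θ : θ * θ = -3 := by rw [θ_eq]; linear_combination 4 * ω_sq

@[simp] lemma conj_θ : conj θ = -θ := by
  rw [θ_eq, map_sub, map_mul, conj_ω, map_one, map_ofNat]; ring

@[simp] lemma conj_conj (x : O) : conj (conj x) = x := by
  rw [← re_add_im_mul_ω x]; simp

lemma sub_conj (x : O) : x - conj x = im x * θ := by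
  conv_lhs => rw [← re_add_im_mul_ω x]
  simp only [map_add, map_mul, map_intCast, conj_ω, θ_eq]
  ring

lemma norm_eq (x : O) : norm x = re x ^ 2 + re x * im x + im x ^ 2 :=
  (QuadraticAlgebra.norm_def (toQuadratic x)).trans (by rw [re, im]; ring)

lemma intCast_norm (x : O) : (norm x : O) = x * conj x := by
  rw [norm_eq]
  conv_rhs => rw [← re_add_im_mul_ω x]
  simp only [map_add, map_mul, map_intCast, conj_ω]
  push_cast
  linear_combination (im x : O) ^ 2 * ω_sq

lemma norm_nonneg (x : O) : 0 ≤ norm x := by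
  rw [norm_eq]; nlinarith [sq_nonneg (re x + im x), sq_nonneg (re x), sq_nonneg (im x)]

lemma norm_eq_zero {x : O} : norm x = 0 ↔ x = 0 := by
  refine ⟨fun h ↦ ?_, fun h ↦ by simp [h, norm]⟩
  rw [norm_eq] at h
  have h_re : re x = 0 := by nlinarith [sq_nonneg (2 * im x + re x), sq_nonneg (re x)]
  have h_im : im x = 0 := by nlinarith [sq_nonneg (2 * re x + im x), sq_nonneg (im x)]
  rw [← re_add_im_mul_ω x, h_re, h_im]; simp

lemma norm_pos {x : O} (hx : x ≠ 0) : 0 < norm x :=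
  (norm_nonneg x).lt_of_ne' (norm_eq_zero.not.2 hx)

instance : CharZero O := charZero_of_injective_ringHom toQuadratic.symm.injective

instance : NoZeroDivisors O where
  eq_zero_or_eq_zero_of_mul_eq_zero {x y} h := by
    have h_norm : norm x * norm y = 0 := by rw [← map_mul, h, norm_eq_zero.2 rfl]
    simpa only [mul_eq_zero, norm_eq_zero] using h_norm

lemma θ_ne_zero : θ ≠ 0 := by
  intro h
  simpa [h] using θ_mul_θ

lemma norm_neg (x : O) : norm (-x) = norm x := by
  rw [← neg_one_mul, map_mul]; simp [norm]

lemma norm_ne_two (x : O) : norm x ≠ 2 := by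
  rw [norm_eq]
  intro h
  have h_mod := congrArg (Int.cast : ℤ → ZMod 4) h
  push_cast at h_mod
  generalize (re x : ZMod 4) = p at h_mod
  generalize (im x : ZMod 4) = q at h_mod
  revert p q
  decide

lemma norm_θ : norm θ = 3 := by
  have h : (norm θ : O) = (3 : ℤ) := by
    rw [intCast_norm, conj_θ, θ_eq]; push_cast; linear_combination -4 * ω_sq
  exact_mod_cast h

lemma norm_two : norm 2 = 4 := by
  have h : (norm 2 : O) = (4 : ℤ) := by rw [intCast_norm, map_ofNat]; norm_num
  exact_mod_cast h

lemma le_norm_of_dvd {x y : O} (h : x ∣ y) (hy : y ≠ 0) : norm x ≤ norm y :=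
  Int.le_of_dvd (norm_pos hy) (map_dvd norm h)

lemma norm_ω : norm ω = 1 := by
  have h : (norm ω : O) = (1 : ℤ) := by
    rw [intCast_norm, conj_ω]; push_cast; linear_combination -ω_sq
  exact_mod_cast h

lemma exists_eq_ω_pow {u : O} (hu : norm u = 1) : ∃ n : ℕ, u = ω ^ n := by
  rw [norm_eq] at hu
  have h_re : -1 ≤ re u ∧ re u ≤ 1 :=
    abs_le.1 (sq_le_one_iff_abs_le_one _ |>.1 (by nlinarith [sq_nonneg (2 * im u + re u)]))
  have h_im : -1 ≤ im u ∧ im u ≤ 1 :=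
    abs_le.1 (sq_le_one_iff_abs_le_one _ |>.1 (by nlinarith [sq_nonneg (2 * re u + im u)]))
  rw [← re_add_im_mul_ω u]
  generalize re u = p at *
  generalize im u = q at *
  obtain ⟨rfl, rfl⟩ | ⟨rfl, rfl⟩ | ⟨rfl, rfl⟩ | ⟨rfl, rfl⟩ | ⟨rfl, rfl⟩ | ⟨rfl, rfl⟩ :
      p = 1 ∧ q = 0 ∨ p = 0 ∧ q = 1 ∨ p = -1 ∧ q = 1 ∨ p = -1 ∧ q = 0 ∨ p = 0 ∧ q = -1 ∨
        p = 1 ∧ q = -1 := by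
    obtain ⟨h₁, h₂⟩ := h_re
    obtain ⟨h₃, h₄⟩ := h_im
    interval_cases p <;> interval_cases q <;> simp at hu ⊢
  · exact ⟨0, by simp⟩
  · exact ⟨1, by simp⟩
  · exact ⟨2, by push_cast; linear_combination -ω_sq⟩
  · exact ⟨3, by push_cast; linear_combination -(ω + 1) * ω_sq⟩
  · exact ⟨4, by push_cast; linear_combination -(ω ^ 2 + ω) * ω_sq⟩
  · exact ⟨5, by push_cast; linear_combination (-(ω ^ 3 + ω ^ 2) + 1) * ω_sq⟩

lemma norm_sub_add_norm_add (x y : O) :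
    norm (x - y) + norm (x + y) = 2 * (norm x + norm y) := by
  have h : ((norm (x - y) + norm (x + y) : ℤ) : O) = (2 * (norm x + norm y) : ℤ) := by
    push_cast [intCast_norm, map_sub, map_add]; ring
  exact_mod_cast h

lemma norm_sub_add_norm_sub_add_norm_sub (x y : O) :
    norm (x - y) + norm (x - ω ^ 2 * y) + norm (x - (ω ^ 2) ^ 2 * y) =
      3 * (norm x + norm y) := by
  have h : ((norm (x - y) + norm (x - ω ^ 2 * y) + norm (x - (ω ^ 2) ^ 2 * y) : ℤ) : O) =
      (3 * (norm x + norm y) : ℤ) := by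
    push_cast [intCast_norm, map_sub, map_mul, map_pow, conj_ω]
    grind [ω_sq]
  exact_mod_cast h

lemma eq_or_eq_neg_of_two_dvd_sub {x y : O} (hx : norm x ≤ 1) (hy : norm y ≤ 1)
    (h : 2 ∣ x - y) : x = y ∨ x = -y := by
  by_contra! hne
  have h_sub : 4 ≤ norm (x - y) := norm_two ▸ le_norm_of_dvd h (sub_ne_zero.2 hne.1)
  have h_add : 0 < norm (x + y) := norm_pos (mt eq_neg_of_add_eq_zero_left hne.2)
  linarith [norm_sub_add_norm_add x y]

lemma θ_dvd_ω_sq_sub_one : θ ∣ ω ^ 2 - 1 :=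
  ⟨ω, by rw [θ_eq]; linear_combination -ω_sq⟩

lemma exists_eq_ω_sq_pow_mul_of_θ_dvd_sub {x y : O} (hx : norm x ≤ 1) (hy : norm y ≤ 1)
    (h : θ ∣ x - y) : ∃ n : ℕ, x = (ω ^ 2) ^ n * y := by
  by_contra! hne
  have h_dvd (n : ℕ) : 3 ≤ norm (x - (ω ^ 2) ^ n * y) := by
    refine norm_θ ▸ le_norm_of_dvd ?_ (sub_ne_zero.2 (hne n))
    have h_pow := (θ_dvd_ω_sq_sub_one.trans (sub_one_dvd_pow_sub_one _ n)).mul_right y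
    convert dvd_sub h h_pow using 1
    ring
  have h₀ := h_dvd 0
  have h₁ := h_dvd 1
  rw [pow_zero, one_mul] at h₀
  rw [pow_one] at h₁
  linarith [h_dvd 2, norm_sub_add_norm_sub_add_norm_sub x y]

/-- The value of the form on `f v + g w`, divided by `3`, for `3`-vectors `v` and `w` with
`ψ(w, v) = θ`: the root lattice `D₄` as an Eisenstein lattice. -/
def normD4 (f g : O) : ℤ := norm f + norm g + im (f * conj g)

lemma three_mul_intCast_im (x : O) : 3 * (im x : O) = -θ * (x - conj x) := by
  rw [sub_conj, θ_eq]; linear_combination 4 * (im x : O) * ω_sq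

lemma three_mul_normD4_left (f g : O) : 3 * normD4 f g = 2 * norm f + norm (f + θ * g) := by
  have h : ((3 * normD4 f g : ℤ) : O) = (2 * norm f + norm (f + θ * g) : ℤ) := by
    push_cast [normD4, mul_add, three_mul_intCast_im, intCast_norm, map_add, map_mul, conj_θ,
      conj_conj]
    rw [θ_eq]
    linear_combination 4 * g * conj g * ω_sq
  exact_mod_cast h

lemma three_mul_normD4_right (f g : O) : 3 * normD4 f g = 2 * norm g + norm (g - θ * f) := by
  have h : ((3 * normD4 f g : ℤ) : O) = (2 * norm g + norm (g - θ * f) : ℤ) := by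
    push_cast [normD4, mul_add, three_mul_intCast_im, intCast_norm, map_sub, map_mul, conj_θ,
      conj_conj]
    rw [θ_eq]
    linear_combination 4 * f * conj f * ω_sq
  exact_mod_cast h

lemma normD4_nonneg (f g : O) : 0 ≤ normD4 f g := by
  linarith [three_mul_normD4_left f g, norm_nonneg f, norm_nonneg (f + θ * g)]

lemma eq_zero_of_normD4_eq_zero {f g : O} (h : normD4 f g = 0) : f = 0 ∧ g = 0 := by
  constructor <;> apply norm_eq_zero.1
  · linarith [three_mul_normD4_left f g, norm_nonneg f, norm_nonneg (f + θ * g)]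
  · linarith [three_mul_normD4_right f g, norm_nonneg g, norm_nonneg (g - θ * f)]

lemma eq_neg_ω_or_eq_neg_ω_sq {u : O} (hu : norm u = 1) (h_im : im u = -1) :
    u = -ω ∨ u = -ω ^ 2 := by
  rw [norm_eq, h_im] at hu
  have h_re : re u * (re u - 1) = 0 := by linarith
  rw [← re_add_im_mul_ω u, h_im]
  obtain h | h := mul_eq_zero.1 h_re
  · left; rw [h]; push_cast; ring
  · right; rw [sub_eq_zero.1 h]; push_cast; linear_combination ω_sq

lemma normD4_eq_one {f g : O} (h : normD4 f g = 1) :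
    f = 0 ∧ norm g = 1 ∨ g = 0 ∧ norm f = 1 ∨
      norm g = 1 ∧ (f = -ω * g ∨ f = -ω ^ 2 * g) := by
  have hf : norm f ≤ 1 := by
    linarith [three_mul_normD4_left f g, norm_nonneg (f + θ * g)]
  have hg : norm g ≤ 1 := by
    linarith [three_mul_normD4_right f g, norm_nonneg (g - θ * f)]
  rw [normD4] at h
  obtain hf₀ | hf₁ : norm f = 0 ∨ norm f = 1 := by have := norm_nonneg f; omega
  · obtain rfl := norm_eq_zero.1 hf₀
    exact Or.inl ⟨rfl, by simpa [norm_eq_zero.2, im] using h⟩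
  obtain hg₀ | hg₁ : norm g = 0 ∨ norm g = 1 := by have := norm_nonneg g; omega
  · exact Or.inr (Or.inl ⟨norm_eq_zero.1 hg₀, hf₁⟩)
  refine Or.inr (Or.inr ⟨hg₁, ?_⟩)
  have h_unit : conj g * g = 1 := by rw [mul_comm, ← intCast_norm, hg₁, Int.cast_one]
  have h_norm : norm (f * conj g) = 1 := by
    have := congrArg norm h_unit
    rw [map_mul, hg₁, map_one, mul_one] at this
    rw [map_mul, hf₁, this, one_mul]
  have hf_eq : f = f * conj g * g := by rw [mul_assoc, h_unit, mul_one]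
  obtain hu | hu := eq_neg_ω_or_eq_neg_ω_sq h_norm (by omega) <;> rw [hf_eq, hu] <;> simp

/-! ### The skew-Hermitian form `ψ / θ` and its triflections -/

section Form

variable {k : ℕ}

/-- The matrix `gram k / θ`. -/
def skewGram (k : ℕ) : Matrix (Fin k) (Fin k) O := Matrix.of fun i j ↦
  if i = j then -θ
  else if (i : ℕ) + 1 = (j : ℕ) then 1
  else if (j : ℕ) + 1 = (i : ℕ) then -1
  else 0

/-- The skew-Hermitian form `φ = ψ / θ`, which is `𝒪`-valued since `ψ` is `θ𝒪`-valued. -/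
def phi : (Fin k → O) →ₗ[O] (Fin k → O) →ₛₗ[conj] O :=
  Matrix.toLinearMapₛₗ₂' O (RingHom.id O) conj (skewGram k)

lemma phi_apply (x y : Fin k → O) :
    phi x y = ∑ i, ∑ j, x i * conj (y j) * skewGram k i j := by
  simp [phi, Matrix.toLinearMapₛₗ₂'_apply, mul_assoc]

lemma gram_eq (i j : Fin k) : gram k i j = θ * skewGram k i j := by
  simp only [gram, skewGram, Matrix.of_apply]
  split_ifs
  · rw [mul_neg, θ_mul_θ, neg_neg]
  · rw [mul_one]
  · rw [conj_θ, mul_neg, mul_one]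
  · rw [mul_zero]

lemma conj_skewGram (i j : Fin k) : conj (skewGram k i j) = -skewGram k j i := by
  obtain rfl | hij := eq_or_ne i j
  · simp [skewGram]
  · simp only [skewGram, Matrix.of_apply, hij, hij.symm, if_false]
    split_ifs <;> first | omega | simp

lemma psi_eq (x y : Fin k → O) : psi k x y = θ * phi x y := by
  simp only [psi, phi_apply, gram_eq, Finset.mul_sum, mul_left_comm θ]

lemma psi_eq_zero {x y : Fin k → O} : psi k x y = 0 ↔ phi x y = 0 := by
  rw [psi_eq, mul_eq_zero, or_iff_right θ_ne_zero]

lemma psi_self_eq_three {x : Fin k → O} : psi k x x = 3 ↔ phi x x = -θ := by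
  rw [psi_eq, ← mul_right_inj' (b := phi x x) θ_ne_zero, mul_neg, θ_mul_θ, neg_neg]

lemma conj_phi (x y : Fin k → O) : conj (phi x y) = -phi y x := by
  simp only [phi_apply, map_sum, map_mul, conj_conj, conj_skewGram, ← Finset.sum_neg_distrib]
  rw [Finset.sum_comm]
  refine Finset.sum_congr rfl fun j _ ↦ Finset.sum_congr rfl fun i _ ↦ ?_
  ring

lemma phi_swap (x y : Fin k → O) : phi y x = -conj (phi x y) := by rw [conj_phi, neg_neg]

lemma isUnitary_iff {g : (Fin k → O) ≃ₗ[O] (Fin k → O)} :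
    IsUnitary k g ↔ ∀ x y, phi (g x) (g y) = phi x y := by
  simp only [IsUnitary, psi_eq, mul_right_inj' θ_ne_zero]

/-- The triflection in `v`. When `v` is a `3`-vector it multiplies `v` by the cube root of
unity `ω²` and fixes the orthogonal complement of `v`. -/
def triflectionMap (v : Fin k → O) : (Fin k → O) →ₗ[O] (Fin k → O) :=
  LinearMap.id - ω • (phi.flip v).smulRight v

lemma triflectionMap_apply (v x : Fin k → O) :
    triflectionMap v x = x - (ω * phi x v) • v := by
  simp [triflectionMap, mul_smul]

lemma phi_triflectionMap {v : Fin k → O} (hv : phi v v = -θ) (x y : Fin k → O) :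
    phi (triflectionMap v x) (triflectionMap v y) = phi x y := by
  simp only [triflectionMap_apply, map_sub, map_smul, map_smulₛₗ, LinearMap.sub_apply,
    LinearMap.smul_apply, smul_eq_mul, map_mul, conj_ω, hv, phi_swap y v, θ_eq]
  linear_combination phi x v * conj (phi y v) * (2 * ω - 1) * ω_sq

lemma phi_triflectionMap_self {v : Fin k → O} (hv : phi v v = -θ) (x : Fin k → O) :
    phi (triflectionMap v x) v = ω ^ 2 * phi x v := by
  simp only [triflectionMap_apply, map_sub, map_smul, LinearMap.sub_apply,
    LinearMap.smul_apply, smul_eq_mul, hv, θ_eq]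
  linear_combination phi x v * ω_sq

lemma triflectionMap_cube {v : Fin k → O} (hv : phi v v = -θ) (x : Fin k → O) :
    triflectionMap v (triflectionMap v (triflectionMap v x)) = x := by
  have h : ω + ω * ω ^ 2 + ω * (ω ^ 2 * ω ^ 2) = 0 := by
    linear_combination (ω ^ 3 + ω ^ 2 + ω) * ω_sq
  have h_smul := congrArg (fun s : O ↦ (s * phi x v) • v) h
  rw [triflectionMap_apply _ (triflectionMap v (triflectionMap v x)), phi_triflectionMap_self hv,
    phi_triflectionMap_self hv, triflectionMap_apply _ (triflectionMap v x),
    phi_triflectionMap_self hv, triflectionMap_apply]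
  simp only [zero_mul, zero_smul] at h_smul
  rw [← sub_eq_zero, ← neg_eq_zero, ← h_smul]
  module

/-- The triflection in a `3`-vector, as an automorphism of the lattice. -/
def triflection {v : Fin k → O} (hv : phi v v = -θ) : (Fin k → O) ≃ₗ[O] (Fin k → O) :=
  LinearEquiv.ofLinearMap (triflectionMap v) (triflectionMap v ∘ₗ triflectionMap v)
    (LinearMap.ext fun x ↦ triflectionMap_cube hv x)
    (LinearMap.ext fun x ↦ triflectionMap_cube hv x)

/-- The group `U(Λᵏ)_z`. -/
def unitaryStabilizer (z : Fin k → O) : Subgroup ((Fin k → O) ≃ₗ[O] (Fin k → O)) where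
  carrier := {g | IsUnitary k g ∧ g z = z}
  one_mem' := ⟨fun _ _ ↦ rfl, rfl⟩
  mul_mem' := fun {g h} hg hh ↦
    ⟨fun x y ↦ (hg.1 _ _).trans (hh.1 x y), (congrArg g hh.2).trans hg.2⟩
  inv_mem' := fun {g} hg ↦
    ⟨fun x y ↦ by simpa using (hg.1 (g.symm x) (g.symm y)).symm, g.symm_apply_eq.2 hg.2.symm⟩

/-- The orbit of `x` under `U(Λᵏ)_z`. -/
def orbit (z x : Fin k → O) : Set (Fin k → O) := MulAction.orbit (unitaryStabilizer z) x

lemma orbit_eq_iff {z x y : Fin k → O} :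
    orbit z x = orbit z y ↔
      ∃ g : (Fin k → O) ≃ₗ[O] (Fin k → O), IsUnitary k g ∧ g z = z ∧ g x = y := by
  rw [eq_comm]
  exact MulAction.orbit_eq_iff.trans
    ⟨fun ⟨g, hg⟩ ↦ ⟨g, g.2.1, g.2.2, hg⟩, fun ⟨g, h_unitary, hz, hx⟩ ↦ ⟨⟨g, h_unitary, hz⟩, hx⟩⟩

lemma orbit_smul {z x y : Fin k → O} (h : orbit z x = orbit z y) (u : O) :
    orbit z (u • x) = orbit z (u • y) := by
  obtain ⟨g, h_unitary, hz, rfl⟩ := orbit_eq_iff.1 h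
  exact orbit_eq_iff.2 ⟨g, h_unitary, hz, g.map_smul u x⟩

lemma phi_eq_of_orbit_eq {z x y : Fin k → O} (h : orbit z x = orbit z y) :
    phi x z = phi y z := by
  obtain ⟨g, h_unitary, hz, rfl⟩ := orbit_eq_iff.1 h
  simpa only [hz] using (isUnitary_iff.1 h_unitary x z).symm

lemma isPrimitiveSubmodule_map {V W : Type*} [AddCommGroup V] [Module O V] [AddCommGroup W]
    [Module O W] {M : Submodule O V} (hM : IsPrimitiveSubmodule M) (g : V ≃ₗ[O] W) :
    IsPrimitiveSubmodule (M.map g.toLinearMap) := by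
  intro s x hs hx
  rw [Submodule.mem_map_equiv] at hx ⊢
  exact hM s _ hs (map_smul g.symm s x ▸ hx)

lemma isPrimitiveSubmodule_span_of_orbit_eq {z x y : Fin k → O} (h : orbit z x = orbit z y)
    (hx : IsPrimitiveSubmodule (Submodule.span O {z, x})) :
    IsPrimitiveSubmodule (Submodule.span O {z, y}) := by
  obtain ⟨g, -, hz, rfl⟩ := orbit_eq_iff.1 h
  simpa [Submodule.map_span, Set.image_pair, hz] using isPrimitiveSubmodule_map hx g

lemma orbit_triflectionMap {z v : Fin k → O} (hv : phi v v = -θ) (hz : phi z v = 0)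
    (x : Fin k → O) : orbit z (triflectionMap v x) = orbit z x :=
  (orbit_eq_iff.2 ⟨triflection hv, isUnitary_iff.2 (phi_triflectionMap hv),
    show triflectionMap v z = z by simp [triflectionMap_apply, hz], rfl⟩).symm

lemma phi_triflectionMap_of_orthogonal {v w : Fin k → O} (h : phi v w = 0) (x : Fin k → O) :
    phi (triflectionMap v x) w = phi x w := by
  simp [triflectionMap_apply, h]

lemma exists_orbit_eq_phi_eq_ω_sq_pow_mul {z v : Fin k → O} (hv : phi v v = -θ)
    (hz : phi z v = 0) (n : ℕ) (x : Fin k → O) :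
    ∃ y, orbit z y = orbit z x ∧ phi y v = (ω ^ 2) ^ n * phi x v ∧
      ∀ w, phi v w = 0 → phi y w = phi x w := by
  induction n with
  | zero => exact ⟨x, rfl, by simp, fun _ _ ↦ rfl⟩
  | succ n ih =>
    obtain ⟨y, h_orbit, h_phi, h_orthogonal⟩ := ih
    refine ⟨triflectionMap v y, (orbit_triflectionMap hv hz y).trans h_orbit, ?_, fun w hw ↦ ?_⟩
    · rw [phi_triflectionMap_self hv, h_phi, pow_succ' (ω ^ 2), mul_assoc]
    · rw [phi_triflectionMap_of_orthogonal hw, h_orthogonal w hw]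

lemma phi_smul_add_smul_self {v w : Fin k → O} (hv : phi v v = -θ) (hw : phi w w = -θ)
    (hvw : phi v w = 1) (s t : O) :
    phi (s • v + t • w) (s • v + t • w) = -θ * normD4 t s := by
  simp only [map_add, map_smul, map_smulₛₗ, LinearMap.add_apply, LinearMap.smul_apply,
    smul_eq_mul, hv, hw, hvw, phi_swap v w, map_one, normD4, Int.cast_add, intCast_norm]
  have h := sub_conj (t * conj s)
  rw [map_mul, conj_conj] at h
  linear_combination -h

section Braid

variable {z v w : Fin k → O} (hv : phi v v = -θ) (hw : phi w w = -θ) (hvw : phi v w = 1)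
  (hzv : phi z v = 0) (hzw : phi z w = 0)

include hw hvw hzw in
lemma orbit_sub_ω_smul : orbit z (v - ω • w) = orbit z v := by
  rw [← orbit_triflectionMap hw hzw v, triflectionMap_apply, hvw, mul_one]

include hw hvw hzw in
lemma orbit_sub_ω_sq_smul : orbit z (v - ω ^ 2 • w) = orbit z v := by
  rw [← orbit_sub_ω_smul hw hvw hzw, ← orbit_triflectionMap hw hzw (v - ω • w),
    triflectionMap_apply, map_sub, map_smul, LinearMap.sub_apply, LinearMap.smul_apply, hvw, hw,
    smul_eq_mul, sub_sub, ← add_smul]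
  congr 3
  rw [θ_eq]
  linear_combination -2 * ω * ω_sq

include hv hw hvw hzv hzw in
lemma orbit_eq_orbit_ω_smul : orbit z w = orbit z (ω • v) := by
  have h_swap : phi w v = -1 := by rw [phi_swap v w, hvw, map_one]
  have h_cube : ω * ω ^ 2 = -1 := by linear_combination (ω + 1) * ω_sq
  have h_smul : w + ω • v = ω • (v - ω ^ 2 • w) := by
    rw [smul_sub, smul_smul, h_cube, neg_one_smul, sub_neg_eq_add, add_comm]
  calc orbit z w = orbit z (w + ω • v) := by
        rw [← orbit_triflectionMap hv hzv w, triflectionMap_apply, h_swap]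
        congr 1; module
    _ = orbit z (ω • (v - ω ^ 2 • w)) := by rw [h_smul]
    _ = orbit z (ω • v) := orbit_smul (orbit_sub_ω_sq_smul hw hvw hzw) ω

include hv hw hvw hzv hzw in
lemma orbit_ω_smul : orbit z (ω • v) = orbit z v := by
  have h_neg : orbit z (-v) = orbit z (ω • w) :=
    orbit_eq_orbit_ω_smul hw (by simpa using hv)
      (by rw [map_neg, phi_swap v w, hvw, map_one, neg_neg]) hzw (by rw [map_neg, hzv, neg_zero])
  have h_sq : orbit z (-v) = orbit z (ω • ω • v) :=
    h_neg.trans (orbit_smul (orbit_eq_orbit_ω_smul hv hw hvw hzv hzw) ω)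
  have h := orbit_smul h_sq (-ω)
  have h₁ : -ω • -v = ω • v := by module
  have h₂ : -ω * (ω * ω) = 1 := by linear_combination -(ω + 1) * ω_sq
  rwa [h₁, smul_smul ω, smul_smul, h₂, one_smul] at h

include hv hw hvw hzv hzw in
lemma orbit_ω_pow_smul (n : ℕ) : orbit z (ω ^ n • v) = orbit z v := by
  induction n with
  | zero => rw [pow_zero, one_smul]
  | succ n ih =>
    rw [pow_succ ω, mul_smul]
    exact (orbit_smul (orbit_ω_smul hv hw hvw hzv hzw) _).trans ih

include hv hw hvw hzv hzw in
lemma orbit_eq_of_mem_span {x : Fin k → O} (hx : phi x x = -θ)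
    (h_mem : x ∈ Submodule.span O {v, w}) : orbit z x = orbit z v := by
  obtain ⟨s, t, rfl⟩ := Submodule.mem_span_pair.1 h_mem
  have h_norm : normD4 t s = 1 := by
    rw [phi_smul_add_smul_self hv hw hvw] at hx
    have h_cast := mul_left_cancel₀ (neg_ne_zero.2 θ_ne_zero) (hx.trans (mul_one _).symm)
    exact_mod_cast h_cast
  have h_unit {u : O} (hu : norm u = 1) {y : Fin k → O} (hy : orbit z y = orbit z v) :
      orbit z (u • y) = orbit z v := by
    obtain ⟨n, rfl⟩ := exists_eq_ω_pow hu
    exact (orbit_smul hy _).trans (orbit_ω_pow_smul hv hw hvw hzv hzw n)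
  have hwv : orbit z w = orbit z v :=
    (orbit_eq_orbit_ω_smul hv hw hvw hzv hzw).trans (orbit_ω_smul hv hw hvw hzv hzw)
  obtain ⟨rfl, hs⟩ | ⟨rfl, ht⟩ | ⟨hs, rfl | rfl⟩ := normD4_eq_one h_norm
  · simpa using h_unit hs rfl
  · simpa using h_unit ht hwv
  · convert h_unit hs (orbit_sub_ω_smul hw hvw hzw) using 2; module
  · convert h_unit hs (orbit_sub_ω_sq_smul hw hvw hzw) using 2; module

end Braid

lemma phi_r (x : Fin k → O) (j : Fin k) : phi x (r k j) = ∑ i, x i * skewGram k i j := by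
  simp [phi_apply, r, Pi.single_apply, apply_ite conj]

lemma phi_eq_sum (x y : Fin k → O) : phi x y = ∑ j, conj (y j) * phi x (r k j) := by
  rw [phi_apply, Finset.sum_comm]
  simp only [phi_r, Finset.mul_sum]
  exact Finset.sum_congr rfl fun j _ ↦ Finset.sum_congr rfl fun i _ ↦ by ring

end Form

/-! ### The `6`-vector `r₁ + r₂` of `Λ⁴` -/

/-- The `6`-vector `r₁ + r₂`. -/
def z : Fin 4 → O := r 4 0 + r 4 1

/-- The `3`-vector `ω²r₁ + r₂`, orthogonal to `z`, `b` and `c`. -/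
def a : Fin 4 → O := ω ^ 2 • r 4 0 + r 4 1

/-- The `3`-vector `r₁ - θr₂ - 2r₃ + θr₄`, orthogonal to `z` and `a`. -/
def b : Fin 4 → O := r 4 0 - θ • r 4 1 - (2 : O) • r 4 2 + θ • r 4 3

/-- The `3`-vector `r₄`, orthogonal to `z` and `a`. -/
def c : Fin 4 → O := r 4 3

section Coordinates

variable (x : Fin 4 → O)

lemma phi_r_zero : phi x (r 4 0) = -θ * x 0 - x 1 := by
  simp [phi_r, skewGram, Fin.sum_univ_four, sub_eq_add_neg, mul_comm θ]

lemma phi_r_one : phi x (r 4 1) = x 0 - θ * x 1 - x 2 := by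
  simp [phi_r, skewGram, Fin.sum_univ_four, sub_eq_add_neg, mul_comm θ]

lemma phi_r_two : phi x (r 4 2) = x 1 - θ * x 2 - x 3 := by
  simp [phi_r, skewGram, Fin.sum_univ_four, sub_eq_add_neg, mul_comm θ]

lemma phi_r_three : phi x (r 4 3) = x 2 - θ * x 3 := by
  simp [phi_r, skewGram, Fin.sum_univ_four, sub_eq_add_neg, mul_comm θ]

lemma phi_z : phi x z = 2 * (1 - ω) * x 0 - 2 * ω * x 1 - x 2 := by
  simp only [z, map_add, phi_r_zero, phi_r_one, θ_eq]
  ring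

lemma phi_a : phi x a = (1 - ω) * (x 1 - x 0) - x 2 := by
  simp only [a, map_add, map_smulₛₗ, map_pow, conj_ω, smul_eq_mul, phi_r_zero, phi_r_one, θ_eq]
  linear_combination ((3 - 2 * ω) * x 0 - x 1) * ω_sq

lemma phi_b : phi x b = -x 3 := by
  simp only [b, map_add, map_sub, map_smulₛₗ, map_mul, map_one, conj_ω, conj_two, smul_eq_mul,
    phi_r_zero, phi_r_one, phi_r_two, phi_r_three, θ_eq]
  linear_combination (-4 * x 1 + 4 * x 3) * ω_sq

lemma phi_c : phi x c = x 2 - θ * x 3 := phi_r_three x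

lemma two_mul_psi_self : 2 * psi 4 x x =
    (norm (phi x z) + 2 * norm (phi x a) + 3 * normD4 (phi x b) (phi x c) : ℤ) := by
  simp only [psi_eq, phi_eq_sum x x, Fin.sum_univ_four, phi_r_zero, phi_r_one, phi_r_two,
    phi_r_three, phi_z, phi_a, phi_b, phi_c, normD4, Int.cast_add, Int.cast_mul, Int.cast_ofNat,
    mul_add, three_mul_intCast_im, intCast_norm, map_sub, map_mul, map_neg, map_one, conj_ω,
    conj_two, conj_conj, θ_eq]
  grind [ω_sq]

variable {x}

lemma eq_zero_of_phi_eq_zero (hz : phi x z = 0) (ha : phi x a = 0) (hb : phi x b = 0)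
    (hc : phi x c = 0) : x = 0 := by
  rw [phi_z] at hz
  rw [phi_a] at ha
  rw [phi_b] at hb
  rw [phi_c] at hc
  have h₃ : x 3 = 0 := neg_eq_zero.1 hb
  have h₂ : x 2 = 0 := by rwa [h₃, mul_zero, sub_zero] at hc
  have h₁ : x 1 = x 0 := by linear_combination ω * (ha + h₂) + (x 1 - x 0) * ω_sq
  have h₀ : x 0 = 0 := by
    have h : 2 * θ * x 0 = 0 := by
      rw [θ_eq]; linear_combination -hz - h₂ - 2 * ω * h₁
    exact (mul_eq_zero.1 h).resolve_left (mul_ne_zero two_ne_zero θ_ne_zero)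
  ext i
  fin_cases i
  exacts [h₀, h₁.trans h₀, h₂, h₃]

lemma eq_of_phi_eq {y : Fin 4 → O} (hz : phi x z = phi y z) (ha : phi x a = phi y a)
    (hb : phi x b = phi y b) (hc : phi x c = phi y c) : x = y := by
  refine sub_eq_zero.1 (eq_zero_of_phi_eq_zero ?_ ?_ ?_ ?_) <;>
    rwa [map_sub, LinearMap.sub_apply, sub_eq_zero]

lemma norm_phi_add_eq_six (hx : psi 4 x x = 3) :
    norm (phi x z) + 2 * norm (phi x a) + 3 * normD4 (phi x b) (phi x c) = 6 := by
  have h := two_mul_psi_self x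
  rw [hx] at h
  have h_six : (2 * 3 : O) = (6 : ℤ) := by norm_num
  exact_mod_cast (h_six.symm.trans h).symm

variable (x)

lemma θ_dvd_phi_z_sub_phi_a : θ ∣ phi x z - phi x a := by
  refine ⟨-(1 - ω) * (θ * x 0 + x 1), ?_⟩
  rw [phi_z, phi_a, θ_eq]
  linear_combination (4 * (1 - ω) * x 0 - 2 * x 1) * ω_sq

lemma two_dvd_phi_c_sub_phi_b_add_phi_z : 2 ∣ phi x c - phi x b + phi x z := by
  refine ⟨(1 - ω) * x 0 - ω * x 1 + (1 - ω) * x 3, ?_⟩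
  rw [phi_z, phi_b, phi_c, θ_eq]
  ring

end Coordinates

lemma z_eq : z = ![1, 1, 0, 0] := by ext i; fin_cases i <;> simp [z, r]

lemma a_eq : a = ![ω ^ 2, 1, 0, 0] := by ext i; fin_cases i <;> simp [a, r]

lemma b_eq : b = ![1, -θ, -2, θ] := by ext i; fin_cases i <;> simp [b, r]

lemma c_eq : c = ![0, 0, 0, 1] := by ext i; fin_cases i <;> simp [c, r]

lemma phi_z_a : phi z a = 0 := by simp [phi_a, z_eq]

lemma phi_z_b : phi z b = 0 := by simp [phi_b, z_eq]

lemma phi_z_c : phi z c = 0 := by simp [phi_c, z_eq]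

lemma phi_a_a : phi a a = -θ := by
  have h : (1 - ω) * (1 - ω ^ 2) = -θ := by rw [θ_eq]; linear_combination ω * ω_sq
  rw [phi_a a]
  simpa [a_eq] using h

lemma phi_a_b : phi a b = 0 := by simp [phi_b, a_eq]

lemma phi_a_c : phi a c = 0 := by simp [phi_c, a_eq]

lemma phi_b_a : phi b a = 0 := by rw [phi_swap a, phi_a_b, map_zero, neg_zero]

lemma phi_b_b : phi b b = -θ := by rw [phi_b b]; simp [b_eq]

lemma phi_b_c : phi b c = 1 := by
  have h : -2 - θ * θ = 1 := by rw [θ_mul_θ]; norm_num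
  simpa [phi_c, b_eq] using h

lemma phi_c_a : phi c a = 0 := by rw [phi_swap a, phi_a_c, map_zero, neg_zero]

lemma phi_c_b : phi c b = -1 := by rw [phi_swap b, phi_b_c, map_one]

lemma psi_b_c : psi 4 b c = θ := by rw [psi_eq, phi_b_c, mul_one]

lemma phi_c_c : phi c c = -θ := by rw [phi_c c]; simp [c_eq]

/-! ### Orbits of the `3`-vectors not orthogonal to `z` -/

lemma orbit_triflectionMap_b (x : Fin 4 → O) : orbit z (triflectionMap b x) = orbit z x :=
  orbit_triflectionMap phi_b_b phi_z_b x

lemma orbit_triflectionMap_c (x : Fin 4 → O) : orbit z (triflectionMap c x) = orbit z x :=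
  orbit_triflectionMap phi_c_c phi_z_c x

lemma phi_triflectionMap_b_c (x : Fin 4 → O) :
    phi (triflectionMap b x) c = phi x c - ω * phi x b := by
  simp [triflectionMap_apply, phi_b_c]

lemma phi_triflectionMap_c_b (x : Fin 4 → O) :
    phi (triflectionMap c x) b = phi x b + ω * phi x c := by
  simp [triflectionMap_apply, phi_c_b]

section NormalForm

variable {x : Fin 4 → O}

lemma exists_orbit_eq_of_phi_b_eq_zero (hb : phi x b = 0) :
    ∃ y, orbit z y = orbit z x ∧ phi y a = phi x a ∧ phi y c = 0 ∧ phi y b = -phi x c := by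
  refine ⟨triflectionMap b (triflectionMap c x), ?_, ?_, ?_, ?_⟩
  · rw [orbit_triflectionMap_b, orbit_triflectionMap_c]
  · rw [phi_triflectionMap_of_orthogonal phi_b_a, phi_triflectionMap_of_orthogonal phi_c_a]
  · rw [phi_triflectionMap_b_c, phi_triflectionMap_self phi_c_c, phi_triflectionMap_c_b, hb]
    ring
  · rw [phi_triflectionMap_self phi_b_b, phi_triflectionMap_c_b, hb]
    linear_combination (ω + 1) * phi x c * ω_sq

lemma exists_orbit_eq_neg_phi_b (hc : phi x c = 0) :
    ∃ y, orbit z y = orbit z x ∧ phi y a = phi x a ∧ phi y c = 0 ∧ phi y b = -phi x b := by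
  have hb : phi (triflectionMap c (triflectionMap b x)) b = 0 := by
    rw [phi_triflectionMap_c_b, phi_triflectionMap_self phi_b_b, phi_triflectionMap_b_c, hc]
    ring
  obtain ⟨y, h_orbit, hya, hyc, hyb⟩ := exists_orbit_eq_of_phi_b_eq_zero hb
  refine ⟨y, ?_, ?_, hyc, ?_⟩
  · rw [h_orbit, orbit_triflectionMap_c, orbit_triflectionMap_b]
  · rw [hya, phi_triflectionMap_of_orthogonal phi_c_a, phi_triflectionMap_of_orthogonal phi_b_a]
  · rw [hyb, phi_triflectionMap_self phi_c_c, phi_triflectionMap_b_c, hc]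
    linear_combination (ω + 1) * phi x b * ω_sq

lemma exists_orbit_eq_phi_c_eq_zero (hx : normD4 (phi x b) (phi x c) ≤ 1) :
    ∃ y, orbit z y = orbit z x ∧ phi y a = phi x a ∧ phi y c = 0 ∧ norm (phi y b) ≤ 1 := by
  obtain h | h : normD4 (phi x b) (phi x c) = 0 ∨ normD4 (phi x b) (phi x c) = 1 := by
    have := normD4_nonneg (phi x b) (phi x c)
    omega
  · obtain ⟨hb, hc⟩ := eq_zero_of_normD4_eq_zero h
    exact ⟨x, rfl, rfl, hc, by simp [hb, norm_eq_zero.2]⟩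
  obtain ⟨hb, h_norm⟩ | ⟨hc, h_norm⟩ | ⟨h_norm, hb | hb⟩ := normD4_eq_one h
  · obtain ⟨y, h_orbit, hya, hyc, hyb⟩ := exists_orbit_eq_of_phi_b_eq_zero hb
    exact ⟨y, h_orbit, hya, hyc, by rw [hyb, norm_neg, h_norm]⟩
  · exact ⟨x, rfl, rfl, hc, h_norm.le⟩
  · obtain ⟨y, h_orbit, hya, hyc, hyb⟩ := exists_orbit_eq_of_phi_b_eq_zero
      (x := triflectionMap c x) (by rw [phi_triflectionMap_c_b, hb]; ring)
    refine ⟨y, h_orbit.trans (orbit_triflectionMap_c x), ?_, hyc, ?_⟩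
    · rw [hya, phi_triflectionMap_of_orthogonal phi_c_a]
    · simp only [hyb, phi_triflectionMap_self phi_c_c, norm_neg, map_mul, map_pow, norm_ω, h_norm]
      norm_num
  · refine ⟨triflectionMap b x, orbit_triflectionMap_b x,
      phi_triflectionMap_of_orthogonal phi_b_a x, ?_, ?_⟩
    · rw [phi_triflectionMap_b_c, hb]
      linear_combination (ω + 1) * phi x c * ω_sq
    · simp only [phi_triflectionMap_self phi_b_b, hb, norm_neg, neg_mul, map_mul, map_pow, norm_ω,
        h_norm]
      norm_num

lemma norm_phi_a_le_one_and_normD4_le_one (hx : psi 4 x x = 3) (hz : phi x z ≠ 0) :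
    norm (phi x a) ≤ 1 ∧ normD4 (phi x b) (phi x c) ≤ 1 := by
  have h_six := norm_phi_add_eq_six hx
  have hz_pos := norm_pos hz
  have ha_nonneg := norm_nonneg (phi x a)
  have ha_ne_two := norm_ne_two (phi x a)
  have h_nonneg := normD4_nonneg (phi x b) (phi x c)
  omega

lemma orbit_eq_of_phi_z_eq_of_phi_a_eq {y : Fin 4 → O} (hx : normD4 (phi x b) (phi x c) ≤ 1)
    (hy : normD4 (phi y b) (phi y c) ≤ 1) (hz : phi x z = phi y z) (ha : phi x a = phi y a) :
    orbit z x = orbit z y := by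
  obtain ⟨x₁, hx_orbit, hxa, hxc, hxb⟩ := exists_orbit_eq_phi_c_eq_zero hx
  obtain ⟨y₁, hy_orbit, hya, hyc, hyb⟩ := exists_orbit_eq_phi_c_eq_zero hy
  have hxz₁ := phi_eq_of_orbit_eq hx_orbit
  have hyz₁ := phi_eq_of_orbit_eq hy_orbit
  have h_dvd : 2 ∣ phi x₁ b - phi y₁ b := by
    convert dvd_sub (two_dvd_phi_c_sub_phi_b_add_phi_z y₁)
      (two_dvd_phi_c_sub_phi_b_add_phi_z x₁) using 1
    rw [hxc, hyc, hxz₁, hyz₁, hz]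
    ring
  obtain hb | hb := eq_or_eq_neg_of_two_dvd_sub hxb hyb h_dvd
  · have h_eq : x₁ = y₁ := eq_of_phi_eq (by rw [hxz₁, hyz₁, hz]) (by rw [hxa, hya, ha]) hb
      (by rw [hxc, hyc])
    rw [← hx_orbit, ← hy_orbit, h_eq]
  · obtain ⟨y₂, hy_orbit₂, hya₂, hyc₂, hyb₂⟩ := exists_orbit_eq_neg_phi_b hyc
    have h_eq : x₁ = y₂ := eq_of_phi_eq (by rw [hxz₁, phi_eq_of_orbit_eq hy_orbit₂, hyz₁, hz])
      (by rw [hxa, hya₂, hya, ha]) (by rw [hb, hyb₂]) (by rw [hxc, hyc₂])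
    rw [← hx_orbit, ← hy_orbit, ← hy_orbit₂, h_eq]

theorem orbit_eq_of_psi_z_eq {y : Fin 4 → O} (hx : psi 4 x x = 3) (hy : psi 4 y y = 3)
    (hxy : psi 4 x z = psi 4 y z) (hz : psi 4 x z ≠ 0) : orbit z x = orbit z y := by
  rw [Ne, psi_eq_zero] at hz
  rw [psi_eq, psi_eq, mul_right_inj' θ_ne_zero] at hxy
  obtain ⟨hxa, hx_le⟩ := norm_phi_a_le_one_and_normD4_le_one hx hz
  obtain ⟨hya, hy_le⟩ := norm_phi_a_le_one_and_normD4_le_one hy (hxy ▸ hz)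
  have h_dvd : θ ∣ phi y a - phi x a := by
    convert dvd_sub (θ_dvd_phi_z_sub_phi_a x) (θ_dvd_phi_z_sub_phi_a y) using 1
    rw [hxy]
    ring
  obtain ⟨n, hn⟩ := exists_eq_ω_sq_pow_mul_of_θ_dvd_sub hya hxa h_dvd
  obtain ⟨x', h_orbit, hx'a, hx'⟩ := exists_orbit_eq_phi_eq_ω_sq_pow_mul phi_a_a phi_z_a n x
  rw [← h_orbit]
  refine orbit_eq_of_phi_z_eq_of_phi_a_eq ?_ hy_le ?_ (hx'a.trans hn.symm)
  · rwa [hx' b phi_a_b, hx' c phi_a_c]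
  · rw [phi_eq_of_orbit_eq h_orbit, hxy]

end NormalForm

/-! ### The `3`-vectors orthogonal to `z` -/

section Orthogonal

variable {x : Fin 4 → O}

lemma mem_span_a (hz : phi x z = 0) (hb : phi x b = 0) (hc : phi x c = 0) :
    x ∈ Submodule.span O {a} := by
  rw [phi_z] at hz
  rw [phi_b] at hb
  rw [phi_c] at hc
  have h₃ : x 3 = 0 := neg_eq_zero.1 hb
  have h₂ : x 2 = 0 := by rwa [h₃, mul_zero, sub_zero] at hc
  have h₀ : x 0 = x 1 * ω ^ 2 := by
    refine mul_left_cancel₀ two_ne_zero ?_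
    linear_combination ω * hz + ω * h₂ + 2 * x 0 * ω_sq
  rw [Submodule.mem_span_singleton, a_eq]
  exact ⟨x 1, by ext i; fin_cases i <;> simp [h₀, h₂, h₃]⟩

lemma mem_span_b_c (hz : phi x z = 0) (ha : phi x a = 0) : x ∈ Submodule.span O {b, c} := by
  rw [phi_z] at hz
  rw [phi_a] at ha
  have h₁ : x 1 = x 0 * -θ := by
    refine mul_left_cancel₀ θ_ne_zero ?_
    rw [θ_eq]
    linear_combination -ω * (hz - ha) + (x 0 - x 1) * ω_sq
  have h₂ : x 2 = x 0 * -2 := by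
    linear_combination -ha + (1 - ω) * h₁ - (1 - ω) * x 0 * θ_eq + 2 * x 0 * ω_sq
  rw [Submodule.mem_span_pair, b_eq, c_eq]
  exact ⟨x 0, x 3 - x 0 * θ, by ext i; fin_cases i <;> simp [h₁, h₂]⟩

lemma mem_span_a_or_mem_span_b_c (hx : psi 4 x x = 3) (hz : phi x z = 0) :
    x ∈ Submodule.span O {a} ∨ x ∈ Submodule.span O {b, c} := by
  have h_six := norm_phi_add_eq_six hx
  rw [hz, norm_eq_zero.2 rfl] at h_six
  have h_nonneg := normD4_nonneg (phi x b) (phi x c)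
  have ha_nonneg := norm_nonneg (phi x a)
  obtain h | ha : normD4 (phi x b) (phi x c) = 0 ∨ norm (phi x a) = 0 := by omega
  · obtain ⟨hb, hc⟩ := eq_zero_of_normD4_eq_zero h
    exact Or.inl (mem_span_a hz hb hc)
  · exact Or.inr (mem_span_b_c hz (norm_eq_zero.1 ha))

lemma span_orthogonal_eq :
    Submodule.span O {x : Fin 4 → O | psi 4 x x = 3 ∧ psi 4 x z = 0} =
      Submodule.span O {a, b, c} := by
  apply le_antisymm <;> rw [Submodule.span_le]
  · rintro x ⟨hx, hz⟩
    obtain h | h := mem_span_a_or_mem_span_b_c hx (psi_eq_zero.1 hz)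
    · exact Submodule.span_mono (by simp) h
    · exact Submodule.span_mono (by simp) h
  · have h_mem {v : Fin 4 → O} (hv : phi v v = -θ) (hz : phi z v = 0) :
        v ∈ Submodule.span O {x : Fin 4 → O | psi 4 x x = 3 ∧ psi 4 x z = 0} :=
      Submodule.subset_span ⟨psi_self_eq_three.2 hv,
        psi_eq_zero.2 (by rw [phi_swap z, hz, map_zero, neg_zero])⟩
    rintro x (rfl | rfl | rfl)
    exacts [h_mem phi_a_a phi_z_a, h_mem phi_b_b phi_z_b, h_mem phi_c_c phi_z_c]

lemma linearIndependent_a_b_c : LinearIndependent O ![a, b, c] := by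
  rw [Fintype.linearIndependent_iff]
  intro s h
  simp only [Fin.sum_univ_three, a_eq, b_eq, c_eq] at h
  have h₁ : s 1 = 0 := by simpa using congrFun h 2
  have h₀ : s 0 = 0 := by simpa [h₁] using congrFun h 1
  have h₂ : s 2 = 0 := by simpa [h₁] using congrFun h 3
  intro i
  fin_cases i
  exacts [h₀, h₁, h₂]

lemma isPrimitiveSubmodule_span_z_c : IsPrimitiveSubmodule (Submodule.span O {z, c}) := by
  have h_mem (y : Fin 4 → O) : y ∈ Submodule.span O {z, c} ↔ y 0 = y 1 ∧ y 2 = 0 := by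
    rw [Submodule.mem_span_pair, z_eq, c_eq]
    constructor
    · rintro ⟨s, t, rfl⟩
      simp
    · rintro ⟨h₁, h₂⟩
      exact ⟨y 0, y 3, by ext i; fin_cases i <;> simp [h₁, h₂]⟩
  intro s y hs hy
  rw [h_mem] at hy ⊢
  exact ⟨mul_left_cancel₀ hs hy.1, (mul_eq_zero.1 hy.2).resolve_left hs⟩

lemma not_isPrimitiveSubmodule_span_z_smul_a {u : O} (hu : u ≠ 0) :
    ¬ IsPrimitiveSubmodule (Submodule.span O {z, u • a}) := by
  intro h
  have h_ne : 1 - ω ^ 2 ≠ 0 := by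
    intro h_eq
    have h_three : (3 : O) = 0 := by linear_combination (2 + ω) * (ω_sq + h_eq) - h_eq
    norm_num at h_three
  have h_mem : r 4 0 ∈ Submodule.span O {z, u • a} :=
    h (u * (1 - ω ^ 2)) _ (mul_ne_zero hu h_ne)
      (Submodule.mem_span_pair.2 ⟨u, -1, by rw [z, a]; module⟩)
  obtain ⟨s, t, hst⟩ := Submodule.mem_span_pair.1 h_mem
  have h₀ : s + t * (u * ω ^ 2) = 1 := by simpa [z_eq, a_eq, r] using congrFun hst 0
  have h₁ : s + t * u = 0 := by simpa [z_eq, a_eq, r] using congrFun hst 1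
  have h_dvd : θ ∣ 1 := (θ_dvd_ω_sq_sub_one.mul_left (t * u)).trans
    (dvd_of_eq (by linear_combination h₀ - h₁))
  have h_le := le_norm_of_dvd h_dvd one_ne_zero
  rw [norm_θ, map_one] at h_le
  norm_num at h_le

lemma orbit_eq_of_mem_span_b_c (hx : psi 4 x x = 3) (h : x ∈ Submodule.span O {b, c}) :
    orbit z x = orbit z b :=
  orbit_eq_of_mem_span phi_b_b phi_c_c phi_b_c phi_z_b phi_z_c (psi_self_eq_three.1 hx) h

lemma orbit_c : orbit z c = orbit z b :=
  orbit_eq_of_mem_span_b_c (psi_self_eq_three.2 phi_c_c) (Submodule.subset_span (by simp))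

theorem isPrimitiveSubmodule_span_z_iff (hx : psi 4 x x = 3) (hz : psi 4 x z = 0) :
    IsPrimitiveSubmodule (Submodule.span O {z, x}) ↔ x ∈ Submodule.span O {b, c} := by
  constructor
  · intro h
    refine (mem_span_a_or_mem_span_b_c hx (psi_eq_zero.1 hz)).resolve_left fun ha ↦ ?_
    obtain ⟨u, rfl⟩ := Submodule.mem_span_singleton.1 ha
    refine not_isPrimitiveSubmodule_span_z_smul_a ?_ h
    rintro rfl
    simp [psi] at hx
  · intro h
    exact isPrimitiveSubmodule_span_of_orbit_eq
      (orbit_c.trans (orbit_eq_of_mem_span_b_c hx h).symm) isPrimitiveSubmodule_span_z_c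

end Orthogonal

end Eisenstein

/-- Let `z := r₁ + r₂`, a 6-vector of `Λ⁴`, and `U(Λ⁴)_z` its stabilizer.
(i) For every nonzero `c ∈ 𝒪`, `U(Λ⁴)_z` acts transitively on the 3-vectors `x` with
`ψ(x,z) = c`.  (ii) The 𝒪-span of the 3-vectors perpendicular to `z` has 𝒪-basis
`(a,b,c) = (ω²r₁ + r₂, r₁ − θr₂ − 2r₃ + θr₄, r₄)` with `ψ(a,a) = ψ(b,b) = ψ(c,c) = 3`,
`ψ(a,b) = ψ(a,c) = 0`, `ψ(b,c) = θ` (so this span is `Λ¹ ⊥ Λ²`).  (iii) A 3-vector `x`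
perpendicular to `z` spans with `z` a primitive sublattice iff `x` lies in the span of
`b` and `c`; any two such are in the same `U(Λ⁴)_z`-orbit. -/
theorem statement4 :
    let z : Fin 4 → O := r 4 0 + r 4 1
    let a : Fin 4 → O := ω ^ 2 • r 4 0 + r 4 1
    let b : Fin 4 → O := r 4 0 - θ • r 4 1 - (2 : O) • r 4 2 + θ • r 4 3
    let c : Fin 4 → O := r 4 3
    -- (i)
    (∀ d : O, d ≠ 0 → ∀ x x' : Fin 4 → O,
      psi 4 x x = 3 → psi 4 x z = d → psi 4 x' x' = 3 → psi 4 x' z = d →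
      ∃ g : (Fin 4 → O) ≃ₗ[O] (Fin 4 → O), IsUnitary 4 g ∧ g z = z ∧ g x = x') ∧
    -- (ii)
    (Submodule.span O {x : Fin 4 → O | psi 4 x x = 3 ∧ psi 4 x z = 0} =
        Submodule.span O {a, b, c} ∧
      LinearIndependent O ![a, b, c] ∧
      psi 4 a a = 3 ∧ psi 4 b b = 3 ∧ psi 4 c c = 3 ∧
      psi 4 a b = 0 ∧ psi 4 a c = 0 ∧ psi 4 b c = θ) ∧
    -- (iii)
    (∀ x : Fin 4 → O, psi 4 x x = 3 → psi 4 x z = 0 →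
      (IsPrimitiveSubmodule (Submodule.span O {z, x}) ↔ x ∈ Submodule.span O {b, c})) ∧
    (∀ x x' : Fin 4 → O,
      psi 4 x x = 3 → psi 4 x z = 0 → IsPrimitiveSubmodule (Submodule.span O {z, x}) →
      psi 4 x' x' = 3 → psi 4 x' z = 0 → IsPrimitiveSubmodule (Submodule.span O {z, x'}) →
      ∃ g : (Fin 4 → O) ≃ₗ[O] (Fin 4 → O), IsUnitary 4 g ∧ g z = z ∧ g x = x') := by
  intro z a b c
  refine ⟨fun d hd x x' hx hxz hx' hxz' ↦ ?_, ⟨Eisenstein.span_orthogonal_eq,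
    Eisenstein.linearIndependent_a_b_c, ?_⟩, ?_, fun x x' hx hxz hxp hx' hxz' hxp' ↦ ?_⟩
  · exact Eisenstein.orbit_eq_iff.1 <| Eisenstein.orbit_eq_of_psi_z_eq hx hx'
      (hxz.trans hxz'.symm) (hxz.trans_ne hd)
  · exact ⟨Eisenstein.psi_self_eq_three.2 Eisenstein.phi_a_a,
      Eisenstein.psi_self_eq_three.2 Eisenstein.phi_b_b,
      Eisenstein.psi_self_eq_three.2 Eisenstein.phi_c_c,
      Eisenstein.psi_eq_zero.2 Eisenstein.phi_a_b, Eisenstein.psi_eq_zero.2 Eisenstein.phi_a_c,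
      Eisenstein.psi_b_c⟩
  · exact fun x ↦ Eisenstein.isPrimitiveSubmodule_span_z_iff
  · have h_mem := (Eisenstein.isPrimitiveSubmodule_span_z_iff hx hxz).1 hxp
    have h_mem' := (Eisenstein.isPrimitiveSubmodule_span_z_iff hx' hxz').1 hxp'
    exact Eisenstein.orbit_eq_iff.1 <| (Eisenstein.orbit_eq_of_mem_span_b_c hx h_mem).trans
      (Eisenstein.orbit_eq_of_mem_span_b_c hx' h_mem').symm

end
end

section
/- Let z be a 6-vector of the 𝒪-lattice Λ⁴. Then there are exactly 8 three-vectors r of Λ⁴ such that z − r is also a 3-vector and ψ(r, z − r) = 0; equivalently, z can be written in exactly 4 distinct ways as an unordered sum of two mutually perpendicular 3-vectors. For z = r₁ + r₂ these four decompositions are z = (z − r) + r with r ∈ { ω r₂ + r₃, ω r₂ + r₃ + ω⁻¹ r₄, ω r₂ + r₃ + ω⁻² r₄, ω r₁ + 2r₂ − θ r₃ − r₄ }. -/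
open Polynomial

noncomputable section

/-!
The lattice `Λ⁴` embeds isometrically in `𝒪⁴` with its standard Hermitian form, as the vectors
that reduce modulo `θ` to words of the ternary tetracode. Its 3-vectors are the unit multiples of
40 vectors `x_l`, and these lines form a projective 3-design: the sums of `|⟨v, x_l⟩|^{2k}` for
`k = 1, 2, 3` are `30 N`, `36 N²` and `54 N³`, where `N = ⟨v, v⟩`.

For `v` in the lattice `⟨v, x_l⟩` is divisible by `θ`, so when `N ≤ 6` the Cauchy–Schwarz
inequality `n ≤ 3 N` for `n = |⟨v, x_l⟩|²` leaves only `n = 0, 3, 9, 12`. When `N = 6`, the cubic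
`n (n - 3) (n - 12)` vanishes at all of these but `n = 9`, and the design property gives its sum
over the lines: exactly 8 lines have `n = 9`. When `N = 3`, `n = 12` is excluded, and `n (n - 3)`
shows in the same way that one line has `n = 9 = 3 N`, the equality case of Cauchy–Schwarz; hence
every 3-vector lies on one of the 40 lines.

A 6-vector `z` is a sum of perpendicular 3-vectors `x` and `z - x` exactly when `⟨x, x⟩ = 3` and
`⟨z, x⟩ = 3`, and a line contains such an `x`, then unique, exactly when `n = 9` on it.
-/

section Hermitian

variable {R ι : Type*} [CommRing R] [StarRing R] [Fintype ι]

theorem star_dotProduct_star_eq (v x : ι → R) : star (v ⬝ᵥ star x) = x ⬝ᵥ star v := by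
  rw [← Matrix.star_dotProduct_star, star_star, dotProduct_comm]

theorem summands_orthogonal_iff {n : R} {z x : ι → R} (hz : z ⬝ᵥ star z = n + n) :
    (x ⬝ᵥ star x = n ∧ (z - x) ⬝ᵥ star (z - x) = n ∧ x ⬝ᵥ star (z - x) = 0) ↔
      x ⬝ᵥ star x = n ∧ z ⬝ᵥ star x = n := by
  have hx_star (hx : x ⬝ᵥ star x = n) : star n = n := by
    rw [← hx, star_dotProduct_star_eq]
  have hxz : star (z ⬝ᵥ star x) = x ⬝ᵥ star z := star_dotProduct_star_eq z x
  simp only [star_sub, dotProduct_sub, sub_dotProduct, hz]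
  constructor
  · rintro ⟨hx, -, h⟩
    refine ⟨hx, ?_⟩
    rw [← star_star (z ⬝ᵥ star x), hxz, sub_eq_zero.1 h, hx, hx_star hx]
  · rintro ⟨hx, h⟩
    rw [h, hx_star hx] at hxz
    simp [hx, h, ← hxz]

theorem sum_mul_star_minors (v x : ι → R) :
    ∑ i, ∑ j, (v i * x j - v j * x i) * star (v i * x j - v j * x i) =
      2 * ((v ⬝ᵥ star v) * (x ⬝ᵥ star x) - (v ⬝ᵥ star x) * star (v ⬝ᵥ star x)) := by
  have expand (i j : ι) : (v i * x j - v j * x i) * star (v i * x j - v j * x i) =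
      (v i * star (v i)) * (x j * star (x j)) + (x i * star (x i)) * (v j * star (v j)) -
        ((v i * star (x i)) * (x j * star (v j)) + (x i * star (v i)) * (v j * star (x j))) := by
    simp only [star_sub, star_mul']
    ring
  rw [star_dotProduct_star_eq]
  simp only [expand, Finset.sum_sub_distrib, Finset.sum_add_distrib, ← Finset.sum_mul_sum,
    dotProduct, Pi.star_apply]
  ring

end Hermitian

/-- The Eisenstein integers as pairs `(a, b)` of integers representing `a + b ω`. Unlike the
quotient `O`, this model has computable arithmetic, and Mathlib provides its conjugation and
norm. -/
abbrev EisensteinPair : Type := QuadraticAlgebra ℤ (-1) 1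

namespace EisensteinPair

open QuadraticAlgebra (norm norm_def)

/-- The primitive sixth root of unity `ω`. -/
abbrev omega : EisensteinPair := QuadraticAlgebra.omega

/-- The square root `θ = 2ω - 1` of `-3`. -/
abbrev theta : EisensteinPair := ⟨-1, 2⟩

theorem three_mul_re_sq_le (x : EisensteinPair) : 3 * x.re ^ 2 ≤ 4 * norm x := by
  rw [norm_def]
  linarith [sq_nonneg (x.re + 2 * x.im)]

theorem three_mul_im_sq_le (x : EisensteinPair) : 3 * x.im ^ 2 ≤ 4 * norm x := by
  rw [norm_def]
  linarith [sq_nonneg (2 * x.re + x.im)]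

theorem norm_nonneg (x : EisensteinPair) : 0 ≤ norm x := by
  linarith [three_mul_re_sq_le x, sq_nonneg x.re]

/-- The finitely many Eisenstein integers of norm at most `n`, cut out of a box so that
membership statements can be decided by enumeration. -/
def normBall (n : ℤ) : Finset EisensteinPair :=
  ((Finset.Icc (-n) n ×ˢ Finset.Icc (-n) n).map
    (QuadraticAlgebra.equivProd (-1 : ℤ) 1).symm.toEmbedding).filter fun x ↦ norm x ≤ n

theorem mem_normBall {n : ℤ} {x : EisensteinPair} : x ∈ normBall n ↔ norm x ≤ n := by
  suffices norm x ≤ n → (-n ≤ x.re ∧ x.re ≤ n) ∧ -n ≤ x.im ∧ x.im ≤ n by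
    simpa [normBall, QuadraticAlgebra.equivProd, Finset.mem_map_equiv]
  intro hx
  have hre := three_mul_re_sq_le x
  have him := three_mul_im_sq_le x
  refine ⟨⟨?_, ?_⟩, ?_, ?_⟩ <;> nlinarith [norm_nonneg x]

/-- Reduction modulo `θ`, whose residue field is `ZMod 3`; it sends `ω` to `-1`. -/
def residue : EisensteinPair →+* ZMod 3 where
  toFun x := ((x.re - x.im : ℤ) : ZMod 3)
  map_zero' := by simp
  map_one' := by simp [QuadraticAlgebra.re_one, QuadraticAlgebra.im_one]
  map_add' x y := by push_cast [QuadraticAlgebra.re_add, QuadraticAlgebra.im_add]; ring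
  map_mul' x y := by
    push_cast [QuadraticAlgebra.re_mul, QuadraticAlgebra.im_mul]
    have three : (3 : ZMod 3) = 0 := rfl
    linear_combination (-x.im * y.im : ZMod 3) * three

theorem residue_apply (x : EisensteinPair) : residue x = ((x.re - x.im : ℤ) : ZMod 3) := rfl

theorem residue_star (x : EisensteinPair) : residue (star x) = residue x := by
  have three : (3 : ZMod 3) = 0 := rfl
  simp only [residue_apply, QuadraticAlgebra.re_star, QuadraticAlgebra.im_star]
  push_cast
  linear_combination (x.im : ZMod 3) * three

theorem residue_eq_zero_iff {x : EisensteinPair} : residue x = 0 ↔ theta ∣ x := by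
  constructor
  · rw [residue_apply, ZMod.intCast_zmod_eq_zero_iff_dvd]
    rintro ⟨m, hm⟩
    refine ⟨⟨x.im + m, -x.im - 2 * m⟩, ?_⟩
    push_cast at hm
    ext <;> simp only [QuadraticAlgebra.re_mul, QuadraticAlgebra.im_mul] <;> linarith
  · rintro ⟨y, rfl⟩
    rw [map_mul, show residue theta = 0 by decide, zero_mul]

theorem norm_theta : norm theta = 3 := by decide

theorem norm_eq_of_residue_eq_zero {x : EisensteinPair} (hx : residue x = 0)
    (hx18 : norm x ≤ 18) : norm x = 0 ∨ norm x = 3 ∨ norm x = 9 ∨ norm x = 12 := by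
  obtain ⟨y, rfl⟩ := residue_eq_zero_iff.1 hx
  clear hx
  rw [map_mul, norm_theta] at *
  have enumeration :
      ∀ y ∈ normBall 6, 3 * norm y ∈ ({0, 3, 9, 12} : Finset ℤ) := by
    decide +kernel
  simpa using enumeration y (mem_normBall.2 (by lia))

theorem norm_eq_zero_iff {x : EisensteinPair} : norm x = 0 ↔ x = 0 := by
  refine ⟨fun hx ↦ ?_, fun hx ↦ by rw [hx, QuadraticAlgebra.norm_zero]⟩
  have hre := three_mul_re_sq_le x
  have him := three_mul_im_sq_le x
  ext
  · exact pow_eq_zero_iff two_ne_zero |>.1 (by linarith [sq_nonneg x.re])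
  · exact pow_eq_zero_iff two_ne_zero |>.1 (by linarith [sq_nonneg x.im])

theorem theta_mul_right_injective : Function.Injective (theta * ·) := by
  intro x y (hxy : theta * x = theta * y)
  have norm_eq := norm_eq_zero_iff.2 (sub_eq_zero.2 hxy)
  rw [← mul_sub, map_mul, norm_theta] at norm_eq
  exact sub_eq_zero.1 (norm_eq_zero_iff.1 (by lia))

theorem norm_omega_pow (k : ℕ) : norm (omega ^ k) = 1 := by
  rw [map_pow, show norm omega = 1 by decide, one_pow]

theorem card_mul_star_omega_pow_eq_three {x : EisensteinPair} (hx : residue x = 0) :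
    (Finset.univ.filter fun k : Fin 6 ↦ x * star (omega ^ (k : ℕ)) = 3).card =
      if norm x = 9 then 1 else 0 := by
  split_ifs with h9
  · have enumeration : ∀ y ∈ normBall 3, norm y = 3 →
        (Finset.univ.filter fun k : Fin 6 ↦ theta * y * star (omega ^ (k : ℕ)) = 3).card = 1 := by
      decide +kernel
    obtain ⟨y, rfl⟩ := residue_eq_zero_iff.1 hx
    rw [map_mul, norm_theta] at h9
    exact enumeration y (mem_normBall.2 (by lia)) (by lia)
  · rw [Finset.card_eq_zero, Finset.filter_eq_empty_iff]
    intro k _ h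
    apply h9
    have norm_eq := congrArg QuadraticAlgebra.norm h
    rwa [map_mul, QuadraticAlgebra.norm_star, norm_omega_pow, mul_one] at norm_eq

end EisensteinPair

section HermitianEisenstein

open QuadraticAlgebra (norm)

variable {ι : Type*} [Fintype ι]

theorem dotProduct_star_self (v : ι → EisensteinPair) :
    v ⬝ᵥ star v = ((∑ i, norm (v i) : ℤ) : EisensteinPair) := by
  simp only [dotProduct, Pi.star_apply, ← QuadraticAlgebra.algebraMap_norm_eq_mul_star,
    eq_intCast, Int.cast_sum]

theorem dotProduct_star_self_eq_intCast_iff {v : ι → EisensteinPair} {n : ℤ} :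
    v ⬝ᵥ star v = n ↔ ∑ i, norm (v i) = n := by
  rw [dotProduct_star_self, Int.cast_inj]

theorem sum_norm_minors (v x : ι → EisensteinPair) :
    ∑ i, ∑ j, norm (v i * x j - v j * x i) =
      2 * ((∑ i, norm (v i)) * ∑ i, norm (x i) - norm (v ⬝ᵥ star x)) := by
  have h := sum_mul_star_minors v x
  simp only [dotProduct_star_self, ← QuadraticAlgebra.algebraMap_norm_eq_mul_star,
    eq_intCast] at h
  exact_mod_cast h

theorem norm_dotProduct_star_le (v x : ι → EisensteinPair) :
    norm (v ⬝ᵥ star x) ≤ (∑ i, norm (v i)) * ∑ i, norm (x i) := by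
  have minors_nonneg : 0 ≤ ∑ i, ∑ j, norm (v i * x j - v j * x i) :=
    Finset.sum_nonneg fun _ _ ↦ Finset.sum_nonneg fun _ _ ↦ EisensteinPair.norm_nonneg _
  linarith [sum_norm_minors v x]

theorem sum_norm_smul_eq_of_norm_dotProduct_star_eq {v x : ι → EisensteinPair}
    (h : norm (v ⬝ᵥ star x) = (∑ i, norm (v i)) * ∑ i, norm (x i)) :
    (∑ i, norm (x i)) • v = (v ⬝ᵥ star x) • x := by
  have minors_nonneg (i j : ι) : 0 ≤ norm (v i * x j - v j * x i) :=
    EisensteinPair.norm_nonneg _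
  have minors_sum : ∑ i, ∑ j, norm (v i * x j - v j * x i) = 0 := by
    rw [sum_norm_minors, h, sub_self, mul_zero]
  have minors_eq_zero (i j : ι) : v i * x j = v j * x i := by
    have hi := (Finset.sum_eq_zero_iff_of_nonneg fun i _ ↦
      Finset.sum_nonneg fun j _ ↦ minors_nonneg i j).1 minors_sum i (Finset.mem_univ i)
    have hij := (Finset.sum_eq_zero_iff_of_nonneg fun j _ ↦ minors_nonneg i j).1 hi j
      (Finset.mem_univ j)
    exact sub_eq_zero.1 (EisensteinPair.norm_eq_zero_iff.1 hij)
  ext1 i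
  rw [Pi.smul_apply, Pi.smul_apply, zsmul_eq_mul, smul_eq_mul, ← dotProduct_star_self, dotProduct,
    dotProduct, Finset.sum_mul, Finset.sum_mul]
  refine Finset.sum_congr rfl fun j _ ↦ ?_
  rw [Pi.star_apply]
  linear_combination star (x j) * minors_eq_zero i j

end HermitianEisenstein

/-- The image of `Λ⁴` in the standard Hermitian space, where its form becomes `v ⬝ᵥ star x`:
the vectors whose reduction modulo `θ` lies in the ternary tetracode, the self-dual code with
parity checks `c₀ = c₂ - c₃` and `c₁ = c₂ + c₃`. -/
def tetracodeLattice : Submodule EisensteinPair (Fin 4 → EisensteinPair) where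
  carrier := {v | EisensteinPair.residue (v 0 - v 2 + v 3) = 0 ∧
    EisensteinPair.residue (v 1 - v 2 - v 3) = 0}
  zero_mem' := by simp
  add_mem' {v x} hv hx := by
    simp only [Set.mem_ofPred_eq, map_add, map_sub, Pi.add_apply] at hv hx ⊢
    exact ⟨by linear_combination hv.1 + hx.1, by linear_combination hv.2 + hx.2⟩
  smul_mem' a v hv := by
    simp only [Set.mem_ofPred_eq, map_add, map_sub, map_mul, Pi.smul_apply, smul_eq_mul] at hv ⊢
    exact ⟨by linear_combination EisensteinPair.residue a * hv.1,
      by linear_combination EisensteinPair.residue a * hv.2⟩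

namespace tetracodeLattice

open EisensteinPair
open QuadraticAlgebra (norm norm_def trace trace_def re_add im_add re_mul im_mul re_star im_star
  re_ofNat im_ofNat)

theorem mem_iff {v : Fin 4 → EisensteinPair} :
    v ∈ tetracodeLattice ↔ residue (v 0 - v 2 + v 3) = 0 ∧ residue (v 1 - v 2 - v 3) = 0 :=
  Iff.rfl

theorem residue_dotProduct_star {v x : Fin 4 → EisensteinPair} (hv : v ∈ tetracodeLattice)
    (hx : x ∈ tetracodeLattice) : residue (v ⬝ᵥ star x) = 0 := by
  obtain ⟨hv0, hv1⟩ := mem_iff.1 hv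
  obtain ⟨hx0, hx1⟩ := mem_iff.1 hx
  have three : (3 : ZMod 3) = 0 := rfl
  simp only [map_add, map_sub] at hv0 hv1 hx0 hx1
  simp only [dotProduct, Fin.sum_univ_four, Pi.star_apply, map_add, map_mul, residue_star]
  linear_combination residue (x 0) * hv0 + (residue (v 2) - residue (v 3)) * hx0 +
    residue (x 1) * hv1 + (residue (v 2) + residue (v 3)) * hx1 +
    (residue (v 2) * residue (x 2) + residue (v 3) * residue (x 3)) * three

/-- The cube roots of unity `1, ω², ω⁴`. -/
def cubeRoot (j : Fin 3) : EisensteinPair := omega ^ (2 * (j : ℕ))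

/-- The tetracode words of weight 3 up to sign, one for each position of the zero coordinate,
with two of their nonzero entries multiplied by `a` and `b`. -/
def wordVector (i : Fin 4) (a b : EisensteinPair) : Fin 4 → EisensteinPair :=
  ![![1, a, b, 0], ![0, -1, a, b], ![1, 0, -a, b], ![1, -a, 0, -b]] i

/-- Labels of the lines spanned by 3-vectors: the four coordinate axes, and nine lines for each
weight-3 tetracode word up to sign. -/
abbrev RootLine : Type := Fin 4 ⊕ Fin 4 × Fin 3 × Fin 3

/-- A 3-vector of the tetracode lattice spanning the line with the given label. -/
def rootLineVector : RootLine → Fin 4 → EisensteinPair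
  | .inl i => Pi.single i theta
  | .inr (i, j, k) => wordVector i (cubeRoot j) (cubeRoot k)

theorem rootLineVector_mem (l : RootLine) : rootLineVector l ∈ tetracodeLattice := by
  rw [mem_iff]
  revert l
  decide +kernel

theorem sum_norm_rootLineVector (l : RootLine) : ∑ i, norm (rootLineVector l i) = 3 := by
  revert l
  decide +kernel

section Moments

/-- The trace pairing of the cubes of `p` and `q`: the part of the sixth moment of `p + c q`,
averaged over cube roots of unity `c`, that is not a function of the norms. -/
def cubeTrace (p q : EisensteinPair) : ℤ := trace (p ^ 3 * star (q ^ 3))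

theorem cubeTrace_neg_left (p q : EisensteinPair) : cubeTrace (-p) q = -cubeTrace p q := by
  rw [cubeTrace, cubeTrace, Odd.neg_pow (by decide), neg_mul, map_neg]

theorem cubeTrace_neg_right (p q : EisensteinPair) : cubeTrace p (-q) = -cubeTrace p q := by
  rw [cubeTrace, cubeTrace, Odd.neg_pow (by decide), star_neg, mul_neg, map_neg]

theorem star_cubeRoot_eq :
    star (cubeRoot 0) = 1 ∧ star (cubeRoot 1) = ⟨0, -1⟩ ∧ star (cubeRoot 2) = ⟨-1, 1⟩ := by
  decide +kernel

theorem sum_norm_add_mul_cubeRoot (p q : EisensteinPair) :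
    ∑ j, norm (p + q * star (cubeRoot j)) = 3 * (norm p + norm q) := by
  obtain ⟨h0, h1, h2⟩ := star_cubeRoot_eq
  rw [Fin.sum_univ_three, h0, h1, h2]
  simp only [mul_one, norm_def, re_add, im_add, re_mul, im_mul]
  ring

theorem sum_norm_sq_add_mul_cubeRoot (p q : EisensteinPair) :
    ∑ j, norm (p + q * star (cubeRoot j)) ^ 2 =
      3 * (norm p ^ 2 + 4 * norm p * norm q + norm q ^ 2) := by
  obtain ⟨h0, h1, h2⟩ := star_cubeRoot_eq
  rw [Fin.sum_univ_three, h0, h1, h2]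
  simp only [mul_one, norm_def, re_add, im_add, re_mul, im_mul]
  ring

theorem sum_norm_cube_add_mul_cubeRoot (p q : EisensteinPair) :
    ∑ j, norm (p + q * star (cubeRoot j)) ^ 3 =
      3 * (norm p ^ 3 + 9 * norm p ^ 2 * norm q + 9 * norm p * norm q ^ 2 + norm q ^ 3 +
        cubeTrace p q) := by
  obtain ⟨h0, h1, h2⟩ := star_cubeRoot_eq
  rw [Fin.sum_univ_three, h0, h1, h2]
  simp only [mul_one, cubeTrace, norm_def, trace_def, pow_succ, pow_zero, one_mul,
    re_add, im_add, re_mul, im_mul, re_star, im_star]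
  ring

theorem sum_add_mul_cubeRoot_pow_three (p q : EisensteinPair) :
    ∑ j, (p + q * star (cubeRoot j)) ^ 3 = 3 * (p ^ 3 + q ^ 3) := by
  obtain ⟨h0, h1, h2⟩ := star_cubeRoot_eq
  rw [Fin.sum_univ_three, h0, h1, h2]
  ext <;> simp only [mul_one, pow_succ, pow_zero, one_mul, re_add, im_add, re_mul, im_mul, re_ofNat,
    im_ofNat] <;> ring

theorem sum_cubeTrace_add_mul_cubeRoot (p q s : EisensteinPair) :
    ∑ j, cubeTrace (p + q * star (cubeRoot j)) s = 3 * (cubeTrace p s + cubeTrace q s) := by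
  have three_zsmul (x : EisensteinPair) : 3 * x = (3 : ℤ) • x := by
    rw [zsmul_eq_mul, Int.cast_ofNat]
  simp only [cubeTrace]
  rw [← map_sum, ← Finset.sum_mul, sum_add_mul_cubeRoot_pow_three, ← map_add, ← add_mul,
    mul_assoc, three_zsmul, map_zsmul, smul_eq_mul]

theorem sum_norm_add_mul_cubeRoots (p q s : EisensteinPair) :
    ∑ j, ∑ k, norm (p + q * star (cubeRoot j) + s * star (cubeRoot k)) =
      9 * (norm p + norm q + norm s) := by
  simp only [sum_norm_add_mul_cubeRoot, ← Finset.mul_sum, Finset.sum_add_distrib,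
    Finset.sum_const, Finset.card_univ, Fintype.card_fin]
  ring

theorem sum_norm_sq_add_mul_cubeRoots (p q s : EisensteinPair) :
    ∑ j, ∑ k, norm (p + q * star (cubeRoot j) + s * star (cubeRoot k)) ^ 2 =
      9 * (norm p ^ 2 + norm q ^ 2 + norm s ^ 2 +
        4 * (norm p * norm q + norm p * norm s + norm q * norm s)) := by
  simp only [sum_norm_sq_add_mul_cubeRoot, sum_norm_add_mul_cubeRoot, ← Finset.mul_sum,
    ← Finset.sum_mul, Finset.sum_add_distrib, Finset.sum_const, Finset.card_univ,
    Fintype.card_fin]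
  ring

theorem sum_norm_cube_add_mul_cubeRoots (p q s : EisensteinPair) :
    ∑ j, ∑ k, norm (p + q * star (cubeRoot j) + s * star (cubeRoot k)) ^ 3 =
      9 * (norm p ^ 3 + norm q ^ 3 + norm s ^ 3 +
        9 * (norm p ^ 2 * norm q + norm p * norm q ^ 2 + norm p ^ 2 * norm s +
          norm p * norm s ^ 2 + norm q ^ 2 * norm s + norm q * norm s ^ 2) +
        36 * norm p * norm q * norm s + cubeTrace p q + cubeTrace p s + cubeTrace q s) := by
  simp only [sum_norm_cube_add_mul_cubeRoot, sum_norm_sq_add_mul_cubeRoot,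
    sum_norm_add_mul_cubeRoot, sum_cubeTrace_add_mul_cubeRoot, ← Finset.mul_sum,
    ← Finset.sum_mul, Finset.sum_add_distrib, Finset.sum_const, Finset.card_univ,
    Fintype.card_fin]
  ring

theorem dotProduct_star_wordVector (v : Fin 4 → EisensteinPair) (a b : EisensteinPair) :
    v ⬝ᵥ star (wordVector 0 a b) = v 0 + v 1 * star a + v 2 * star b ∧
    v ⬝ᵥ star (wordVector 1 a b) = -v 1 + v 2 * star a + v 3 * star b ∧
    v ⬝ᵥ star (wordVector 2 a b) = v 0 + -v 2 * star a + v 3 * star b ∧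
    v ⬝ᵥ star (wordVector 3 a b) = v 0 + -v 1 * star a + -v 3 * star b := by
  simp [dotProduct, Fin.sum_univ_four, wordVector]

theorem sum_rootLine_dotProduct (f : EisensteinPair → ℤ) (v : Fin 4 → EisensteinPair) :
    ∑ l, f (v ⬝ᵥ star (rootLineVector l)) =
      ∑ i, f (v i * star theta) +
      (∑ j, ∑ k, f (v 0 + v 1 * star (cubeRoot j) + v 2 * star (cubeRoot k)) +
        ∑ j, ∑ k, f (-v 1 + v 2 * star (cubeRoot j) + v 3 * star (cubeRoot k)) +
        ∑ j, ∑ k, f (v 0 + -v 2 * star (cubeRoot j) + v 3 * star (cubeRoot k)) +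
        ∑ j, ∑ k, f (v 0 + -v 1 * star (cubeRoot j) + -v 3 * star (cubeRoot k))) := by
  have axis (i : Fin 4) : v ⬝ᵥ star (Pi.single i theta) = v i * star theta := by
    rw [← Pi.single_star, dotProduct_single]
  have words (a b : EisensteinPair) := dotProduct_star_wordVector v a b
  simp only [Fintype.sum_sum_type, Fintype.sum_prod_type, Fin.sum_univ_four (M := ℤ),
    rootLineVector, axis, words]

theorem norm_mul_star_theta (x : EisensteinPair) : norm (x * star theta) = 3 * norm x := by
  rw [map_mul, QuadraticAlgebra.norm_star, norm_theta, mul_comm]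

theorem sum_norm_rootLine (v : Fin 4 → EisensteinPair) :
    ∑ l, norm (v ⬝ᵥ star (rootLineVector l)) = 30 * ∑ i, norm (v i) := by
  rw [sum_rootLine_dotProduct (fun x ↦ norm x)]
  simp only [norm_mul_star_theta, sum_norm_add_mul_cubeRoots, QuadraticAlgebra.norm_neg,
    Fin.sum_univ_four]
  ring

theorem sum_norm_sq_rootLine (v : Fin 4 → EisensteinPair) :
    ∑ l, norm (v ⬝ᵥ star (rootLineVector l)) ^ 2 = 36 * (∑ i, norm (v i)) ^ 2 := by
  rw [sum_rootLine_dotProduct (fun x ↦ norm x ^ 2)]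
  simp only [norm_mul_star_theta, sum_norm_sq_add_mul_cubeRoots, QuadraticAlgebra.norm_neg,
    Fin.sum_univ_four]
  ring

theorem sum_norm_cube_rootLine (v : Fin 4 → EisensteinPair) :
    ∑ l, norm (v ⬝ᵥ star (rootLineVector l)) ^ 3 = 54 * (∑ i, norm (v i)) ^ 3 := by
  rw [sum_rootLine_dotProduct (fun x ↦ norm x ^ 3)]
  simp only [norm_mul_star_theta, sum_norm_cube_add_mul_cubeRoots, QuadraticAlgebra.norm_neg,
    cubeTrace_neg_left, cubeTrace_neg_right, Fin.sum_univ_four]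
  ring

end Moments

theorem norm_dotProduct_star_rootLineVector_eq {v : Fin 4 → EisensteinPair}
    (hv : v ∈ tetracodeLattice) (hv6 : ∑ i, norm (v i) ≤ 6) (l : RootLine) :
    norm (v ⬝ᵥ star (rootLineVector l)) = 0 ∨ norm (v ⬝ᵥ star (rootLineVector l)) = 3 ∨
      norm (v ⬝ᵥ star (rootLineVector l)) = 9 ∨ norm (v ⬝ᵥ star (rootLineVector l)) = 12 := by
  refine norm_eq_of_residue_eq_zero (residue_dotProduct_star hv (rootLineVector_mem l)) ?_
  have cauchySchwarz := norm_dotProduct_star_le v (rootLineVector l)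
  rw [sum_norm_rootLineVector] at cauchySchwarz
  linarith

/-- The lines on which the projection of `v` has the length that makes some 3-vector of the line
have Hermitian product 3 with `v`. -/
def alignedLines (v : Fin 4 → EisensteinPair) : Finset RootLine :=
  Finset.univ.filter fun l ↦ norm (v ⬝ᵥ star (rootLineVector l)) = 9

theorem sum_ite_norm_eq_nine (v : Fin 4 → EisensteinPair) (c : ℤ) :
    ∑ l, (if norm (v ⬝ᵥ star (rootLineVector l)) = 9 then c else 0) =
      c * (alignedLines v).card := by
  rw [← Finset.sum_filter, Finset.sum_const, nsmul_eq_mul, mul_comm, alignedLines]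

theorem card_alignedLines_of_sum_norm_eq_three {u : Fin 4 → EisensteinPair}
    (hu : u ∈ tetracodeLattice) (hu3 : ∑ i, norm (u i) = 3) : (alignedLines u).card = 1 := by
  have vanishing (l : RootLine) :
      norm (u ⬝ᵥ star (rootLineVector l)) ^ 2 - 3 * norm (u ⬝ᵥ star (rootLineVector l)) =
        if norm (u ⬝ᵥ star (rootLineVector l)) = 9 then 54 else 0 := by
    have cauchySchwarz := norm_dotProduct_star_le u (rootLineVector l)
    rw [sum_norm_rootLineVector, hu3] at cauchySchwarz
    rcases norm_dotProduct_star_rootLineVector_eq hu (by lia) l with h | h | h | h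
    · simp [h]
    · simp [h]
    · simp [h]
    · lia
  have moments := Finset.sum_congr rfl fun l (_ : l ∈ Finset.univ) ↦ vanishing l
  rw [Finset.sum_sub_distrib, ← Finset.mul_sum, sum_norm_sq_rootLine, sum_norm_rootLine,
    sum_ite_norm_eq_nine, hu3] at moments
  lia

theorem card_alignedLines_of_sum_norm_eq_six {v : Fin 4 → EisensteinPair}
    (hv : v ∈ tetracodeLattice) (hv6 : ∑ i, norm (v i) = 6) : (alignedLines v).card = 8 := by
  have vanishing (l : RootLine) :
      norm (v ⬝ᵥ star (rootLineVector l)) ^ 3 - 15 * norm (v ⬝ᵥ star (rootLineVector l)) ^ 2 +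
          36 * norm (v ⬝ᵥ star (rootLineVector l)) =
        if norm (v ⬝ᵥ star (rootLineVector l)) = 9 then -162 else 0 := by
    rcases norm_dotProduct_star_rootLineVector_eq hv hv6.le l with h | h | h | h <;> simp [h]
  have moments := Finset.sum_congr rfl fun l (_ : l ∈ Finset.univ) ↦ vanishing l
  rw [Finset.sum_add_distrib, Finset.sum_sub_distrib, ← Finset.mul_sum, ← Finset.mul_sum,
    sum_norm_cube_rootLine, sum_norm_sq_rootLine, sum_norm_rootLine, sum_ite_norm_eq_nine,
    hv6] at moments
  lia

/-- The 3-vectors of the tetracode lattice: the six unit multiples of the vector chosen on each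
line. -/
def root (p : RootLine × Fin 6) : Fin 4 → EisensteinPair :=
  omega ^ (p.2 : ℕ) • rootLineVector p.1

theorem root_mem (p : RootLine × Fin 6) : root p ∈ tetracodeLattice :=
  tetracodeLattice.smul_mem _ (rootLineVector_mem p.1)

theorem sum_norm_root (p : RootLine × Fin 6) : ∑ i, norm (root p i) = 3 := by
  simp only [root, Pi.smul_apply, smul_eq_mul, map_mul, norm_omega_pow, one_mul,
    sum_norm_rootLineVector]

theorem dotProduct_star_root (v : Fin 4 → EisensteinPair) (p : RootLine × Fin 6) :
    v ⬝ᵥ star (root p) = v ⬝ᵥ star (rootLineVector p.1) * star (omega ^ (p.2 : ℕ)) := by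
  rw [root, star_smul, dotProduct_smul, smul_eq_mul, mul_comm]

theorem card_dotProduct_star_root_eq_three {v : Fin 4 → EisensteinPair}
    (hv : v ∈ tetracodeLattice) :
    (Finset.univ.filter fun p ↦ v ⬝ᵥ star (root p) = 3).card = (alignedLines v).card := by
  have card_line (l : RootLine) := card_mul_star_omega_pow_eq_three
    (residue_dotProduct_star hv (rootLineVector_mem l))
  simp only [Finset.card_filter] at card_line
  simp only [Finset.card_filter, alignedLines, Fintype.sum_prod_type, dotProduct_star_root,
    card_line]

theorem existsUnique_dotProduct_star_root_eq_three {u : Fin 4 → EisensteinPair}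
    (hu : u ∈ tetracodeLattice) (hu3 : ∑ i, norm (u i) = 3) :
    ∃! p, u ⬝ᵥ star (root p) = 3 := by
  have card_eq_one := card_dotProduct_star_root_eq_three hu
  rw [card_alignedLines_of_sum_norm_eq_three hu hu3, Finset.card_eq_one] at card_eq_one
  obtain ⟨p, hp⟩ := card_eq_one
  simp only [Finset.ext_iff, Finset.mem_filter_univ, Finset.mem_singleton] at hp
  exact ⟨p, (hp p).2 rfl, fun q ↦ (hp q).1⟩

theorem root_injective : Function.Injective root := by
  intro p q hpq
  have self (p : RootLine × Fin 6) : root p ⬝ᵥ star (root p) = 3 := by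
    exact_mod_cast dotProduct_star_self_eq_intCast_iff.2 (sum_norm_root p)
  have unique := existsUnique_dotProduct_star_root_eq_three (root_mem p) (sum_norm_root p)
  exact unique.unique (self p) (by rw [hpq, self])

theorem exists_root_eq {u : Fin 4 → EisensteinPair} (hu : u ∈ tetracodeLattice)
    (hu3 : ∑ i, norm (u i) = 3) : ∃ p, root p = u := by
  obtain ⟨p, hp, -⟩ := existsUnique_dotProduct_star_root_eq_three hu hu3
  refine ⟨p, ?_⟩
  have parallel := sum_norm_smul_eq_of_norm_dotProduct_star_eq (v := u) (x := root p) (by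
    rw [hp, hu3, sum_norm_root]; decide)
  have three_smul (x : Fin 4 → EisensteinPair) : (3 : EisensteinPair) • x = (3 : ℤ) • x :=
    Int.cast_smul_eq_zsmul EisensteinPair 3 x
  rw [sum_norm_root, hp, three_smul] at parallel
  exact (smul_right_injective _ three_ne_zero parallel).symm

theorem ncard_summands {v : Fin 4 → EisensteinPair} (hv : v ∈ tetracodeLattice)
    (hv6 : ∑ i, norm (v i) = 6) :
    Set.ncard {u | u ∈ tetracodeLattice ∧ ∑ i, norm (u i) = 3 ∧ v ⬝ᵥ star u = 3} = 8 := by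
  have image : {u | u ∈ tetracodeLattice ∧ ∑ i, norm (u i) = 3 ∧ v ⬝ᵥ star u = 3} =
      (Finset.univ.filter fun p ↦ v ⬝ᵥ star (root p) = 3).image root := by
    ext u
    simp only [Finset.coe_image, Finset.coe_filter_univ, Set.mem_image, Set.mem_ofPred_eq]
    constructor
    · rintro ⟨hu, hu3, hvu⟩
      obtain ⟨p, rfl⟩ := exists_root_eq hu hu3
      exact ⟨p, hvu, rfl⟩
    · rintro ⟨p, hp, rfl⟩
      exact ⟨root_mem p, sum_norm_root p, hp⟩
  rw [image, Set.ncard_coe_finset, Finset.card_image_of_injective _ root_injective,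
    card_dotProduct_star_root_eq_three hv, card_alignedLines_of_sum_norm_eq_six hv hv6]

end tetracodeLattice

section Coordinates

open EisensteinPair
open scoped Matrix

/-- The identification of the quotient presentation of the Eisenstein ring with integer pairs. -/
def eisensteinEquiv : O ≃ₐ[ℤ] EisensteinPair :=
  AlgEquiv.ofAlgHom
    (AdjoinRoot.liftAlgHom _ (Algebra.ofId ℤ EisensteinPair) omega (by
      simp only [eval₂_add, eval₂_sub, eval₂_pow, eval₂_X, eval₂_one]
      decide))
    (QuadraticAlgebra.lift ⟨ω, by simp only [neg_smul, one_smul]; linear_combination ω_sq⟩)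
    (QuadraticAlgebra.algHom_ext (by simp [ω]))
    (AdjoinRoot.algHom_ext (by simp [ω]))

theorem eisensteinEquiv_ω : eisensteinEquiv ω = omega := by
  simp [eisensteinEquiv, ω]

theorem eisensteinEquiv_conj (x : O) : eisensteinEquiv (conj x) = star (eisensteinEquiv x) := by
  have ringHom_eq : (eisensteinEquiv : O →+* EisensteinPair).comp conj =
      (starRingEnd EisensteinPair).comp eisensteinEquiv := by
    refine AdjoinRoot.ringHom_ext (RingHom.ext_int _ _) ?_
    change eisensteinEquiv (conj ω) = star (eisensteinEquiv ω)
    have conj_ω : conj ω = 1 - ω := AdjoinRoot.lift_root _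
    rw [conj_ω, map_sub, map_one, eisensteinEquiv_ω]
    decide
  exact DFunLike.congr_fun ringHom_eq x

theorem eisensteinEquiv_θ : eisensteinEquiv θ = theta := by
  rw [θ, map_sub, eisensteinEquiv_conj, eisensteinEquiv_ω]
  decide

/-- Coordinates with respect to `r₁, …, r₄`, as vectors of integer pairs. -/
def coords : (Fin 4 → O) ≃+ (Fin 4 → EisensteinPair) :=
  AddEquiv.piCongrRight fun _ ↦ eisensteinEquiv.toRingEquiv.toAddEquiv

theorem coords_apply (x : Fin 4 → O) (i : Fin 4) : coords x i = eisensteinEquiv (x i) := rfl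

theorem coords_smul (a : O) (x : Fin 4 → O) : coords (a • x) = eisensteinEquiv a • coords x := by
  ext1 i
  simp only [coords_apply, Pi.smul_apply, smul_eq_mul, map_mul]

theorem coords_r (i : Fin 4) : coords (r 4 i) = Pi.single i 1 := by
  ext1 j
  rw [coords_apply, r, Pi.apply_single (fun _ ↦ eisensteinEquiv) (fun _ ↦ map_zero _), map_one]

/-- The images of `r₁, …, r₄` in the tetracode lattice, as rows. -/
def tetracodeMatrix : Matrix (Fin 4) (Fin 4) EisensteinPair :=
  !![theta, 0, 0, 0; 1, 1, 1, 0; 0, -theta, 0, 0; 0, -1, 1, 1]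

theorem tetracodeMatrix_mul_conjTranspose (i j : Fin 4) :
    (tetracodeMatrix * tetracodeMatrixᴴ) i j = eisensteinEquiv (gram 4 i j) := by
  have gram_image : eisensteinEquiv (gram 4 i j) = if i = j then 3
      else if (i : ℕ) + 1 = (j : ℕ) then theta
      else if (j : ℕ) + 1 = (i : ℕ) then star theta
      else 0 := by
    simp only [gram, apply_ite eisensteinEquiv, eisensteinEquiv_conj, eisensteinEquiv_θ,
      map_zero, map_ofNat]
  rw [gram_image]
  clear gram_image
  revert i j
  decide +kernel

theorem eisensteinEquiv_psi (x y : Fin 4 → O) :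
    eisensteinEquiv (psi 4 x y) =
      coords x ᵥ* tetracodeMatrix ⬝ᵥ star (coords y ᵥ* tetracodeMatrix) := by
  rw [Matrix.star_vecMul, Matrix.dotProduct_mulVec, Matrix.vecMul_vecMul,
    ← Matrix.dotProduct_mulVec]
  simp only [psi, dotProduct, Matrix.mulVec, tetracodeMatrix_mul_conjTranspose, map_sum, map_mul,
    eisensteinEquiv_conj, coords_apply, Pi.star_apply, Finset.mul_sum]
  refine Finset.sum_congr rfl fun i _ ↦ Finset.sum_congr rfl fun j _ ↦ ?_
  ring

theorem psi_eq_iff {x y : Fin 4 → O} {a : O} :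
    psi 4 x y = a ↔ coords x ᵥ* tetracodeMatrix ⬝ᵥ star (coords y ᵥ* tetracodeMatrix) =
      eisensteinEquiv a := by
  rw [← eisensteinEquiv_psi, eisensteinEquiv.injective.eq_iff]

theorem vecMul_tetracodeMatrix (c : Fin 4 → EisensteinPair) :
    c ᵥ* tetracodeMatrix =
      ![theta * c 0 + c 1, c 1 - theta * c 2 - c 3, c 1 + c 3, c 3] := by
  unfold tetracodeMatrix
  generalize theta = t
  ext1 i
  fin_cases i <;> simp [Matrix.vecMul, dotProduct, Fin.sum_univ_four] <;> ring

theorem vecMul_tetracodeMatrix_injective : Function.Injective (· ᵥ* tetracodeMatrix) := by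
  intro c d hcd
  simp only [vecMul_tetracodeMatrix, Matrix.vecCons_inj] at hcd
  obtain ⟨h0, h1, h2, h3, -⟩ := hcd
  have hc1 : c 1 = d 1 := by linear_combination h2 - h3
  have hc0 : c 0 = d 0 := theta_mul_right_injective (by linear_combination h0 - hc1)
  have hc2 : c 2 = d 2 := theta_mul_right_injective (by linear_combination hc1 - h1 - h3)
  ext1 i
  fin_cases i
  exacts [hc0, hc1, hc2, h3]

theorem mem_tetracodeLattice_iff_exists_vecMul {v : Fin 4 → EisensteinPair} :
    v ∈ tetracodeLattice ↔ ∃ c, c ᵥ* tetracodeMatrix = v := by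
  rw [tetracodeLattice.mem_iff, residue_eq_zero_iff, residue_eq_zero_iff]
  have theta_sq : theta * theta = -3 := by decide
  constructor
  · rintro ⟨⟨a, ha⟩, e, he⟩
    refine ⟨![a, v 2 - v 3, theta * v 3 - e, v 3], ?_⟩
    rw [vecMul_tetracodeMatrix]
    ext1 i
    fin_cases i
    · change theta * a + (v 2 - v 3) = v 0
      linear_combination -ha
    · change v 2 - v 3 - theta * (theta * v 3 - e) - v 3 = v 1
      linear_combination -he - v 3 * theta_sq
    · exact sub_add_cancel _ _
    · rfl
  · rintro ⟨c, rfl⟩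
    rw [vecMul_tetracodeMatrix]
    refine ⟨⟨c 0, ?_⟩, theta * c 3 - c 2, ?_⟩
    · change theta * c 0 + c 1 - (c 1 + c 3) + c 3 = theta * c 0
      ring
    · change c 1 - theta * c 2 - c 3 - (c 1 + c 3) - c 3 = theta * (theta * c 3 - c 2)
      linear_combination -c 3 * theta_sq

/-- The 3-vectors `x` of `Λ⁴` for which `z = x + (z - x)` is a decomposition into perpendicular
3-vectors. -/
def perpSummands (z : Fin 4 → O) : Set (Fin 4 → O) :=
  {x | psi 4 x x = 3 ∧ psi 4 (z - x) (z - x) = 3 ∧ psi 4 x (z - x) = 0}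

theorem mem_perpSummands_iff {z x : Fin 4 → O} (hz : psi 4 z z = 6) :
    x ∈ perpSummands z ↔
      coords x ᵥ* tetracodeMatrix ⬝ᵥ star (coords x ᵥ* tetracodeMatrix) = 3 ∧
      coords z ᵥ* tetracodeMatrix ⬝ᵥ star (coords x ᵥ* tetracodeMatrix) = 3 := by
  rw [psi_eq_iff, map_ofNat] at hz
  rw [perpSummands, Set.mem_ofPred_eq, psi_eq_iff, psi_eq_iff, psi_eq_iff, map_sub,
    Matrix.sub_vecMul, map_ofNat, map_zero]
  exact summands_orthogonal_iff (hz.trans (by decide))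

theorem ncard_perpSummands {z : Fin 4 → O} (hz : psi 4 z z = 6) :
    (perpSummands z).ncard = 8 := by
  have image : (fun x ↦ coords x ᵥ* tetracodeMatrix) '' perpSummands z =
      {u | u ∈ tetracodeLattice ∧ ∑ i, QuadraticAlgebra.norm (u i) = 3 ∧
        coords z ᵥ* tetracodeMatrix ⬝ᵥ star u = 3} := by
    ext u
    simp only [Set.mem_image, mem_perpSummands_iff hz, Set.mem_ofPred_eq,
      ← dotProduct_star_self_eq_intCast_iff, Int.cast_ofNat]
    constructor
    · rintro ⟨x, hx, rfl⟩
      exact ⟨mem_tetracodeLattice_iff_exists_vecMul.2 ⟨_, rfl⟩, hx⟩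
    · rintro ⟨hu, summand⟩
      obtain ⟨c, rfl⟩ := mem_tetracodeLattice_iff_exists_vecMul.1 hu
      obtain ⟨x, rfl⟩ := coords.surjective c
      exact ⟨x, summand, rfl⟩
  have hz_norm : ∑ i, QuadraticAlgebra.norm ((coords z ᵥ* tetracodeMatrix) i) = 6 := by
    rw [← dotProduct_star_self_eq_intCast_iff, psi_eq_iff.1 hz]
    exact map_ofNat eisensteinEquiv 6
  rw [← Set.ncard_image_of_injective _ (f := fun x ↦ coords x ᵥ* tetracodeMatrix)
      (vecMul_tetracodeMatrix_injective.comp coords.injective), image]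
  exact tetracodeLattice.ncard_summands
    (mem_tetracodeLattice_iff_exists_vecMul.2 ⟨_, rfl⟩) hz_norm

/-- The coordinates of `r₁ + r₂`. -/
def standardSum : Fin 4 → EisensteinPair := Pi.single 0 1 + Pi.single 1 1

/-- The coordinates of the eight summands of `r₁ + r₂`, in a form that can be checked by
evaluation. -/
def standardSummands : Finset (Fin 4 → EisensteinPair) :=
  let a₁ := omega • Pi.single 1 1 + Pi.single 2 1
  let a₂ := omega • Pi.single 1 1 + Pi.single 2 1 + star omega • Pi.single 3 1
  let a₃ := omega • Pi.single 1 1 + Pi.single 2 1 + star omega ^ 2 • Pi.single 3 1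
  let a₄ := omega • Pi.single 0 1 + (2 : EisensteinPair) • Pi.single 1 1 -
    theta • Pi.single 2 1 - Pi.single 3 1
  {a₁, a₂, a₃, a₄, standardSum - a₁, standardSum - a₂, standardSum - a₃, standardSum - a₄}

theorem card_standardSummands : standardSummands.card = 8 := by
  decide +kernel

theorem dotProduct_star_standardSummands :
    ∀ c ∈ standardSummands,
      c ᵥ* tetracodeMatrix ⬝ᵥ star (c ᵥ* tetracodeMatrix) = 3 ∧
      standardSum ᵥ* tetracodeMatrix ⬝ᵥ star (c ᵥ* tetracodeMatrix) = 3 := by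
  decide +kernel

theorem perpSummands_eq_of_image_coords {z : Fin 4 → O} {S : Set (Fin 4 → O)}
    (hz : coords z = standardSum) (hS : coords '' S = standardSummands) : perpSummands z = S := by
  have hz6 : psi 4 z z = 6 := by
    rw [psi_eq_iff, hz, map_ofNat]
    decide +kernel
  have subset : S ⊆ perpSummands z := by
    intro x hx
    have hcx : coords x ∈ standardSummands := by
      rw [← Finset.mem_coe, ← hS]
      exact Set.mem_image_of_mem coords hx
    rw [mem_perpSummands_iff hz6, hz]
    exact dotProduct_star_standardSummands _ hcx
  have ncard_eq : S.ncard = 8 := by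
    rw [← Set.ncard_image_of_injective S coords.injective, hS, Set.ncard_coe_finset,
      card_standardSummands]
  have finite : (perpSummands z).Finite :=
    Set.finite_of_ncard_ne_zero (by rw [ncard_perpSummands hz6]; decide)
  exact (Set.eq_of_subset_of_ncard_le subset
    (by rw [ncard_perpSummands hz6, ncard_eq]) finite).symm

end Coordinates

/-- Let `z` be a 6-vector of `Λ⁴`.  There are exactly 8 three-vectors `x`
with `z − x` also a 3-vector and `ψ(x, z−x) = 0`; equivalently, `z` is a sum of two
mutually perpendicular 3-vectors in exactly 4 ways (unordered).  For `z = r₁ + r₂` the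
four decompositions are `z = (z − x) + x` with
`x ∈ {ωr₂ + r₃, ωr₂ + r₃ + ω⁻¹r₄, ωr₂ + r₃ + ω⁻²r₄, ωr₁ + 2r₂ − θr₃ − r₄}`
(here `ω⁻¹ = conj ω`). -/
theorem statement5 :
    (∀ z : Fin 4 → O, psi 4 z z = 6 →
      Set.ncard {x : Fin 4 → O |
        psi 4 x x = 3 ∧ psi 4 (z - x) (z - x) = 3 ∧ psi 4 x (z - x) = 0} = 8) ∧
    (let z : Fin 4 → O := r 4 0 + r 4 1
     let a₁ : Fin 4 → O := ω • r 4 1 + r 4 2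
     let a₂ : Fin 4 → O := ω • r 4 1 + r 4 2 + conj ω • r 4 3
     let a₃ : Fin 4 → O := ω • r 4 1 + r 4 2 + (conj ω) ^ 2 • r 4 3
     let a₄ : Fin 4 → O := ω • r 4 0 + (2 : O) • r 4 1 - θ • r 4 2 - r 4 3
     {x : Fin 4 → O |
        psi 4 x x = 3 ∧ psi 4 (z - x) (z - x) = 3 ∧ psi 4 x (z - x) = 0} =
       {a₁, a₂, a₃, a₄, z - a₁, z - a₂, z - a₃, z - a₄}) := by
  refine ⟨fun z hz ↦ ncard_perpSummands hz, ?_⟩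
  intro z a₁ a₂ a₃ a₄
  have coords_z : coords z = standardSum := by
    simp only [z, map_add, coords_r, standardSum]
  apply perpSummands_eq_of_image_coords coords_z
  simp only [Set.image_insert_eq, Set.image_singleton, map_sub, coords_z]
  simp only [a₁, a₂, a₃, a₄, map_add, map_sub, map_pow, map_ofNat, coords_r, coords_smul,
    eisensteinEquiv_ω, eisensteinEquiv_conj, eisensteinEquiv_θ, standardSummands,
    Finset.coe_insert, Finset.coe_singleton]

end
end
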